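/- For every ν ∈ [0,1], every s ∈ {−1/2, 1/2} and every τ ∈ ℝ, the 2×2 matrix M_s^ν(τ)*·M_s^ν(τ) − η_ν²·K^ν(τ)·𝟙₂ is positive semidefinite; moreover η_ν is the maximal constant with this property: for every η > η_ν there exists τ ∈ ℝ (in fact τ = 0) such that M_s^ν(τ)*·M_s^ν(τ) − η²·K^ν(τ)·𝟙₂ is not positive semidefinite. -/

import Mathlib

open Matrix
open scoped ComplexOrder

/-- Υ_ν := √(1 − ν²). -/
noncomputable def Ups (ν : ℝ) : ℝ := Real.sqrt (1 - ν ^ 2)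

/-- w_ν := Υ_ν · cot(π Υ_ν / 2) for ν ∈ [0,1), with w_1 := 2/π (continuous extension). -/
noncomputable def w (ν : ℝ) : ℝ :=
  if ν = 1 then 2 / Real.pi else Ups ν * Real.cot (Real.pi * Ups ν / 2)

/-- η_ν := (√(9+4ν²) − 4ν)/(3(1 − 2 w_ν)) for ν ≠ √3/2, and η_{√3/2} := 1/(√3 (π−2)). -/
noncomputable def eta (ν : ℝ) : ℝ :=
  if ν = Real.sqrt 3 / 2 then 1 / (Real.sqrt 3 * (Real.pi - 2))
  else (Real.sqrt (9 + 4 * ν ^ 2) - 4 * ν) / (3 * (1 - 2 * w ν))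

/-- V_l(z) := Γ((l+1+iz)/2)Γ((l+1−iz)/2) / (2 Γ((l+2+iz)/2)Γ((l+2−iz)/2)). -/
noncomputable def Vl (l : ℕ) (z : ℂ) : ℂ :=
  Complex.Gamma ((l + 1 + Complex.I * z) / 2) * Complex.Gamma ((l + 1 - Complex.I * z) / 2) /
    (2 * Complex.Gamma ((l + 2 + Complex.I * z) / 2) * Complex.Gamma ((l + 2 - Complex.I * z) / 2))

/-- K^ν(τ) := (1 + 4τ² + 4w_ν² − 4w_ν(sech(πτ) + 2τ tanh(πτ)))/(1 + 4τ²). -/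
noncomputable def Kf (ν τ : ℝ) : ℝ :=
  (1 + 4 * τ ^ 2 + 4 * (w ν) ^ 2
      - 4 * w ν * (1 / Real.cosh (Real.pi * τ) + 2 * τ * Real.tanh (Real.pi * τ)))
    / (1 + 4 * τ ^ 2)

/-- M_s^ν(τ): the 2×2 matrix with rows (−ν V_{1/2−s}(τ+i/2), 1) and (1, −ν V_{1/2+s}(τ+i/2));
here s ∈ {−1/2, 1/2}, so the indices 1/2 − s and 1/2 + s lie in {0, 1}. -/
noncomputable def Mmat (ν s τ : ℝ) : Matrix (Fin 2) (Fin 2) ℂ :=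
  !![-(ν : ℂ) * Vl (if s = 1/2 then 0 else 1) ((τ : ℂ) + Complex.I / 2), 1;
     1, -(ν : ℂ) * Vl (if s = 1/2 then 1 else 0) ((τ : ℂ) + Complex.I / 2)]


/-! ### Two by two matrices -/

theorem herm_two (N : Matrix (Fin 2) (Fin 2) ℂ) (hN : N.IsHermitian) (T D : ℝ)
    (hT : N.trace = (T : ℂ)) (hD : N.det = (D : ℂ)) :
    N.PosSemidef ↔ 0 ≤ T ∧ 0 ≤ D := by
  have h1 := hN.trace_eq_sum_eigenvalues
  have h2 := hN.det_eq_prod_eigenvalues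
  rw [hT, Fin.sum_univ_two] at h1
  rw [hD, Fin.prod_univ_two] at h2
  have h1' : T = hN.eigenvalues 0 + hN.eigenvalues 1 := by
    apply Complex.ofReal_injective; rw [h1]; push_cast; rfl
  have h2' : D = hN.eigenvalues 0 * hN.eigenvalues 1 := by
    apply Complex.ofReal_injective; rw [h2]; push_cast; rfl
  rw [hN.posSemidef_iff_eigenvalues_nonneg]
  constructor
  · intro h
    have a := h 0
    have b := h 1
    simp only [Pi.zero_apply] at a b
    exact ⟨by linarith, by rw [h2']; positivity⟩
  · rintro ⟨hT0, hD0⟩ i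
    rw [h1'] at hT0
    rw [h2'] at hD0
    have : 0 ≤ hN.eigenvalues 0 ∧ 0 ≤ hN.eigenvalues 1 := by
      rcases mul_nonneg_iff.1 hD0 with h | h
      · exact h
      · exact ⟨by linarith, by linarith⟩
    fin_cases i
    · exact this.1
    · exact this.2

theorem psd_iff (A B : ℂ) (t : ℝ) :
    ((!![A, 1; 1, B] : Matrix (Fin 2) (Fin 2) ℂ)ᴴ * !![A, 1; 1, B]
        - (t : ℂ) • (1 : Matrix (Fin 2) (Fin 2) ℂ)).PosSemidef ↔
    0 ≤ (2 + Complex.normSq A + Complex.normSq B) - 2 * t ∧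
    0 ≤ t ^ 2 - (2 + Complex.normSq A + Complex.normSq B) * t
      + (1 + Complex.normSq A * Complex.normSq B - 2 * (A * B).re) := by
  apply herm_two
  · apply Matrix.IsHermitian.sub
    · exact Matrix.isHermitian_conjTranspose_mul_self _
    · ext i j
      fin_cases i <;> fin_cases j <;> simp
  · rw [Matrix.trace_fin_two]
    apply Complex.ext
    · simp [Matrix.mul_apply, Fin.sum_univ_two, Complex.normSq_apply]; ring
    · simp [Matrix.mul_apply, Fin.sum_univ_two, Complex.normSq_apply]; ring
  · rw [Matrix.det_fin_two]
    apply Complex.ext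
    · simp [Matrix.mul_apply, Fin.sum_univ_two, Complex.normSq_apply, pow_two]; ring
    · simp [Matrix.mul_apply, Fin.sum_univ_two, Complex.normSq_apply, pow_two]; ring

/-! ### The functions `V_0` and `V_1` on the line -/

theorem V_facts (τ : ℝ) :
    Complex.normSq (Vl 0 ((τ : ℂ) + Complex.I / 2)) = 4 / (1 + 4 * τ ^ 2) ∧
    Complex.normSq (Vl 1 ((τ : ℂ) + Complex.I / 2)) = 4 / (9 + 4 * τ ^ 2) ∧
    (Vl 0 ((τ : ℂ) + Complex.I / 2) * Vl 1 ((τ : ℂ) + Complex.I / 2)).re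
      = 4 * (3 + 4 * τ ^ 2) / ((1 + 4 * τ ^ 2) * (9 + 4 * τ ^ 2)) := by
  set a : ℂ := 1 / 4 + Complex.I * τ / 2 with ha
  have hare : a.re = 1 / 4 := by simp [ha]; try norm_num
  have haim : a.im = τ / 2 := by simp [ha]; try norm_num
  have hI : Complex.I * Complex.I = -1 := Complex.I_mul_I
  have V0 : Vl 0 ((τ : ℂ) + Complex.I / 2) = Complex.Gamma a * Complex.Gamma (1 - a) /
      (2 * Complex.Gamma (a + 1 / 2) * Complex.Gamma (3 / 2 - a)) := by
    unfold Vl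
    congr 2
    · congr 1; simp only [ha]; push_cast; linear_combination (1 / 4) * hI
    · congr 1; simp only [ha]; push_cast; linear_combination (-1 / 4) * hI
    · congr 2; simp only [ha]; push_cast; linear_combination (1 / 4) * hI
    · congr 1; simp only [ha]; push_cast; linear_combination (-1 / 4) * hI
  have V1 : Vl 1 ((τ : ℂ) + Complex.I / 2) = Complex.Gamma (a + 1 / 2) * Complex.Gamma (3 / 2 - a) /
      (2 * Complex.Gamma (a + 1) * Complex.Gamma (1 - a + 1)) := by
    unfold Vl
    congr 2
    · congr 1; simp only [ha]; push_cast; linear_combination (1 / 4) * hI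
    · congr 1; simp only [ha]; push_cast; linear_combination (-1 / 4) * hI
    · congr 2; simp only [ha]; push_cast; linear_combination (1 / 4) * hI
    · congr 1; simp only [ha]; push_cast; linear_combination (-1 / 4) * hI
  have ha0 : a ≠ 0 := by intro h; rw [h] at hare; norm_num at hare
  have ha1 : 1 - a ≠ 0 := by
    intro h
    have := congrArg Complex.re h
    rw [Complex.sub_re, hare] at this; norm_num at this
  rw [Complex.Gamma_add_one _ ha0, Complex.Gamma_add_one _ ha1] at V1
  have g1 : Complex.Gamma a ≠ 0 := Complex.Gamma_ne_zero_of_re_pos (by rw [hare]; norm_num)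
  have g2 : Complex.Gamma (1 - a) ≠ 0 :=
    Complex.Gamma_ne_zero_of_re_pos (by rw [Complex.sub_re, hare]; norm_num)
  have g3 : Complex.Gamma (a + 1 / 2) ≠ 0 :=
    Complex.Gamma_ne_zero_of_re_pos (by rw [Complex.add_re, hare]; norm_num)
  have g4 : Complex.Gamma (3 / 2 - a) ≠ 0 :=
    Complex.Gamma_ne_zero_of_re_pos (by rw [Complex.sub_re, hare]; norm_num)
  have c1 : Complex.normSq (Complex.Gamma (1 - a)) = Complex.normSq (Complex.Gamma (a + 1 / 2)) := by
    rw [← Complex.normSq_conj (Complex.Gamma (a + 1 / 2)), ← Complex.Gamma_conj]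
    congr 2
    apply Complex.ext
    · simp [hare]; norm_num
    · simp [haim]
  have c2 : Complex.normSq (Complex.Gamma (3 / 2 - a))
      = Complex.normSq a * Complex.normSq (Complex.Gamma a) := by
    rw [← Complex.normSq_mul, ← Complex.Gamma_add_one _ ha0,
      ← Complex.normSq_conj (Complex.Gamma (a + 1)), ← Complex.Gamma_conj]
    congr 2
    apply Complex.ext
    · simp [hare]; norm_num
    · simp [haim]
  have n1 : Complex.normSq (Complex.Gamma a) ≠ 0 := by simpa using g1
  have n3 : Complex.normSq (Complex.Gamma (a + 1 / 2)) ≠ 0 := by rwa [Ne, Complex.normSq_eq_zero]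
  have na : Complex.normSq a = (1 + 4 * τ ^ 2) / 16 := by
    rw [Complex.normSq_apply, hare, haim]; ring
  have na1 : Complex.normSq (1 - a) = (9 + 4 * τ ^ 2) / 16 := by
    rw [Complex.normSq_apply, Complex.sub_re, Complex.sub_im, hare, haim]; simp; ring
  have p1 : (1 + 4 * τ ^ 2) ≠ 0 := by positivity
  have p9 : (9 + 4 * τ ^ 2) ≠ 0 := by positivity
  have n2 : Complex.normSq 2 = 4 := by simp; norm_num
  refine ⟨?_, ?_, ?_⟩
  · rw [V0]
    simp only [Complex.normSq_div, Complex.normSq_mul, c1, c2, na, n2]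
    generalize Complex.normSq (Complex.Gamma (a + 1 / 2)) = G at n3 ⊢
    field_simp
    norm_num
  · rw [V1]
    simp only [Complex.normSq_div, Complex.normSq_mul, c1, c2, na, na1, n2]
    generalize Complex.normSq (Complex.Gamma (a + 1 / 2)) = G at n3 ⊢
    field_simp
    norm_num
  · have hp : Vl 0 ((τ : ℂ) + Complex.I / 2) * Vl 1 ((τ : ℂ) + Complex.I / 2)
        = (4 * (a * (1 - a)))⁻¹ := by
      rw [V0, V1]
      generalize Complex.Gamma (a + 1 / 2) = G at g3 ⊢
      generalize Complex.Gamma (3 / 2 - a) = G' at g4 ⊢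
      field_simp
      norm_num
    rw [hp, Complex.inv_re]
    simp only [Complex.normSq_mul, na, na1]
    have : Complex.normSq 4 = 16 := by simp; norm_num
    rw [this]
    simp [hare, haim]
    field_simp
    ring

/-! ### The function `z cot(π z / 2)` -/

noncomputable def Fc (z : ℂ) : ℂ :=
  if z = 0 then 2 / (Real.pi : ℂ) else z * Complex.cot (Real.pi * z / 2)

noncomputable def ct (v : ℝ) (n : ℕ) : ℝ :=
  ((n : ℝ) + 1) ^ 2 / ((4 * ((n : ℝ) + 1) ^ 2 - v) * (4 * ((n : ℝ) + 1) ^ 2 - 1 / 4))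

noncomputable def cc (v : ℝ) : ℝ := 16 / Real.pi * ∑' n : ℕ, ct v n

theorem one_le_sq (n : ℕ) : (1 : ℝ) ≤ ((n : ℝ) + 1) ^ 2 := by
  have : (0 : ℝ) ≤ n := Nat.cast_nonneg n
  nlinarith

theorem ct_nonneg {v : ℝ} (hv : v ≤ 1) (n : ℕ) : 0 ≤ ct v n := by
  have := one_le_sq n
  unfold ct
  apply div_nonneg (by positivity)
  apply mul_nonneg <;> linarith

theorem ct_summable {v : ℝ} (hv : v ≤ 1) : Summable (ct v) := by
  have h : Summable (fun n : ℕ => 1 / ((n : ℝ) + 1) ^ 2) := by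
    have := (summable_nat_add_iff 1).2 (Real.summable_one_div_nat_pow.2 (le_refl 2))
    simpa using this
  refine Summable.of_nonneg_of_le (ct_nonneg hv) ?_ h
  intro n
  have := one_le_sq n
  unfold ct
  set m := ((n : ℝ) + 1) ^ 2
  rw [div_le_div_iff₀ (mul_pos (by linarith) (by linarith)) (by linarith)]
  nlinarith

theorem hasSum_conv {f g : ℕ → ℂ} {a b : ℂ} (h : HasSum g b) (hf : ∀ n, f n = g n)
    (hab : a = b) : HasSum f a := by
  have : f = g := funext hf
  rw [this, hab]; exact h

theorem Fc_hasSum_of_re {z : ℂ} (h0 : 0 < z.re) (h2 : z.re < 2) :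
    HasSum (fun n : ℕ => 4 * z ^ 2 / (z ^ 2 - 4 * ((n : ℂ) + 1) ^ 2)) (Real.pi * Fc z - 2) := by
  have hz : z ≠ 0 := by rintro rfl; simp at h0
  have hmem : z / 2 ∈ Complex.integerComplement := by
    rintro ⟨k, hk⟩
    have := congrArg Complex.re hk
    simp at this
    have h1 : (0 : ℝ) < k := by rw [this]; linarith
    have h3 : (k : ℝ) < 1 := by rw [this]; linarith
    have h1' : 0 < k := by exact_mod_cast h1
    have h3' : k < 1 := by exact_mod_cast h3
    omega
  have h := (summable_cotTerm hmem).hasSum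
  have e : ∑' n : ℕ, cotTerm (z / 2) n = Real.pi * Complex.cot (Real.pi * (z / 2)) - 1 / (z / 2) :=
    (cot_series_rep' hmem).symm
  rw [e] at h
  have h' := h.mul_left z
  refine hasSum_conv h' ?_ ?_
  · intro n
    have a1 : z / 2 - (n + 1) ≠ 0 := by
      intro h
      have : z / 2 = ((n + 1 : ℤ) : ℂ) := by push_cast; linear_combination h
      exact hmem ⟨_, this.symm⟩
    have a2 : z / 2 + (n + 1) ≠ 0 := by
      intro h
      have : z / 2 = ((-(n + 1) : ℤ) : ℂ) := by push_cast; linear_combination h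
      exact hmem ⟨_, this.symm⟩
    have a3 : z ^ 2 - 4 * ((n : ℂ) + 1) ^ 2 = 4 * ((z / 2 - (n + 1)) * (z / 2 + (n + 1))) := by ring
    rw [a3]
    unfold cotTerm
    generalize hp : z / 2 - ((n : ℂ) + 1) = p at *
    generalize hq : z / 2 + ((n : ℂ) + 1) = q at *
    have hz : z = p + q := by rw [← hp, ← hq]; ring
    field_simp
    rw [hz]; ring
  · unfold Fc
    rw [if_neg hz]
    field_simp

theorem Fc_hasSum {u : ℝ} (h0 : 0 ≤ u) (h2 : u ≤ 1) :
    HasSum (fun n : ℕ => 4 * (u : ℂ) ^ 2 / ((u : ℂ) ^ 2 - 4 * ((n : ℂ) + 1) ^ 2))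
      (Real.pi * Fc u - 2) := by
  rcases h0.eq_or_lt with h | h
  · subst h
    have : (Real.pi : ℂ) ≠ 0 := by exact_mod_cast Real.pi_ne_zero
    have e : (Real.pi : ℂ) * Fc ((0 : ℝ) : ℂ) - 2 = 0 := by
      simp [Fc]; field_simp; norm_num
    rw [e]
    simp
  · exact Fc_hasSum_of_re (by simpa using h) (by simp; linarith)

theorem nsq_re (z : ℂ) (n : ℕ) :
    (4 * ((n : ℂ) + 1) ^ 2 - z ^ 2).re = 4 * ((n : ℝ) + 1) ^ 2 - (z ^ 2).re := by
  have : (4 * ((n : ℂ) + 1) ^ 2) = ((4 * ((n : ℝ) + 1) ^ 2 : ℝ) : ℂ) := by push_cast; rfl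
  rw [this, Complex.sub_re, Complex.ofReal_re]

theorem Fc_diff_hasSum {z : ℂ} (hz0 : 0 < z.re) (hz2 : z.re < 2) (hz : (z ^ 2).re ≤ 1) {u : ℝ}
    (h0 : 0 ≤ u) (h2 : u ≤ 1) :
    HasSum (fun n : ℕ => -16 * ((n : ℂ) + 1) ^ 2 * (z ^ 2 - (u : ℂ) ^ 2) /
      ((4 * ((n : ℂ) + 1) ^ 2 - z ^ 2) * (4 * ((n : ℂ) + 1) ^ 2 - (u : ℂ) ^ 2)))
      (Real.pi * (Fc z - Fc u)) := by
  have := (Fc_hasSum_of_re hz0 hz2).sub (Fc_hasSum h0 h2)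
  refine hasSum_conv this ?_ ?_
  · intro n
    have a1 : 4 * ((n : ℂ) + 1) ^ 2 - z ^ 2 ≠ 0 := by
      intro h
      have h' := congrArg Complex.re h
      rw [nsq_re] at h'
      simp only [Complex.zero_re] at h'
      have := one_le_sq n
      linarith
    have a2 : 4 * ((n : ℂ) + 1) ^ 2 - (u : ℂ) ^ 2 ≠ 0 := by
      intro h
      have h' := congrArg Complex.re h
      rw [nsq_re] at h'
      have e : ((u : ℂ) ^ 2).re = u ^ 2 := by
        rw [← Complex.ofReal_pow, Complex.ofReal_re]
      rw [e] at h'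
      simp only [Complex.zero_re] at h'
      have := one_le_sq n
      nlinarith
    have e1 : z ^ 2 - 4 * ((n : ℂ) + 1) ^ 2 = -(4 * ((n : ℂ) + 1) ^ 2 - z ^ 2) := by ring
    have e2 : (u : ℂ) ^ 2 - 4 * ((n : ℂ) + 1) ^ 2 = -(4 * ((n : ℂ) + 1) ^ 2 - (u : ℂ) ^ 2) := by
      ring
    rw [e1, e2, div_neg, div_neg, neg_sub_neg, div_sub_div _ _ a2 a1,
      div_eq_div_iff (mul_ne_zero a1 a2) (mul_ne_zero a2 a1)]
    ring
  · ring

theorem Fc_diff_le (τ : ℝ) {u : ℝ} (h0 : 0 ≤ u) (h2 : u ≤ 1) :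
    ‖Fc (1 / 2 - Complex.I * τ) - Fc u‖
      ≤ cc (u ^ 2) * ‖(1 / 2 - Complex.I * τ) ^ 2 - (u : ℂ) ^ 2‖ := by
  set z : ℂ := 1 / 2 - Complex.I * τ with hz
  have hre : z.re = 1 / 2 := by simp [hz]
  have him : z.im = - τ := by simp [hz]
  have hz2 : (z ^ 2).re = 1 / 4 - τ ^ 2 := by
    rw [pow_two, Complex.mul_re, hre, him]; ring
  have hs := Fc_diff_hasSum (z := z) (by rw [hre]; norm_num) (by rw [hre]; norm_num)
    (by rw [hz2]; nlinarith [sq_nonneg τ]) h0 h2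
  have hu : u ^ 2 ≤ 1 := by nlinarith
  have hc := (ct_summable hu).hasSum.mul_left (16 * ‖z ^ 2 - (u : ℂ) ^ 2‖)
  have hb := hs.norm_le_of_bounded hc ?_
  · rw [norm_mul, Complex.norm_real, Real.norm_of_nonneg Real.pi_pos.le] at hb
    unfold cc
    have : 16 / Real.pi * (∑' n, ct (u ^ 2) n) * ‖z ^ 2 - (u : ℂ) ^ 2‖
      = (16 * ‖z ^ 2 - (u : ℂ) ^ 2‖ * ∑' n, ct (u ^ 2) n) / Real.pi := by ring
    rw [this, le_div_iff₀ Real.pi_pos, mul_comm]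
    exact hb
  · intro n
    have hm := one_le_sq n
    have b1 : 4 * ((n : ℝ) + 1) ^ 2 - 1 / 4 ≤ ‖4 * ((n : ℂ) + 1) ^ 2 - z ^ 2‖ := by
      refine le_trans ?_ (Complex.re_le_norm _)
      rw [nsq_re, hz2]
      nlinarith [sq_nonneg τ]
    have b2 : ‖4 * ((n : ℂ) + 1) ^ 2 - (u : ℂ) ^ 2‖ = 4 * ((n : ℝ) + 1) ^ 2 - u ^ 2 := by
      have : 4 * ((n : ℂ) + 1) ^ 2 - (u : ℂ) ^ 2 = ((4 * ((n : ℝ) + 1) ^ 2 - u ^ 2 : ℝ) : ℂ) := by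
        push_cast; rfl
      rw [this, Complex.norm_real, Real.norm_of_nonneg (by linarith)]
    have b3 : ‖((n : ℂ) + 1) ^ 2‖ = ((n : ℝ) + 1) ^ 2 := by
      have : ((n : ℂ) + 1) ^ 2 = ((((n : ℝ) + 1) ^ 2 : ℝ) : ℂ) := by push_cast; rfl
      rw [this, Complex.norm_real, Real.norm_of_nonneg (by linarith)]
    rw [norm_div, norm_mul, norm_mul, norm_mul, b2, b3]
    have : ‖(-16 : ℂ)‖ = 16 := by simp
    rw [this]
    unfold ct
    have p1 : 0 < 4 * ((n : ℝ) + 1) ^ 2 - 1 / 4 := by linarith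
    have p2 : 0 < 4 * ((n : ℝ) + 1) ^ 2 - u ^ 2 := by linarith
    rw [mul_div_assoc', mul_comm (4 * ((n : ℝ) + 1) ^ 2 - u ^ 2)]
    rw [mul_right_comm (16 : ℝ)]
    gcongr

theorem Fc_half_sub {u : ℝ} (h0 : 0 ≤ u) (h2 : u ≤ 1) :
    Fc (1 / 2) - Fc u = ((cc (u ^ 2) * (u ^ 2 - 1 / 4) : ℝ) : ℂ) := by
  have hr : ((1 / 2 : ℂ)).re = 1 / 2 := by simp
  have hs := Fc_diff_hasSum (z := 1 / 2) (by rw [hr]; norm_num) (by rw [hr]; norm_num)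
    (by norm_num [pow_two]) h0 h2
  have hu : u ^ 2 ≤ 1 := by nlinarith
  have hc := (ct_summable hu).hasSum.mul_left (16 * (u ^ 2 - 1 / 4))
  have hc' := Complex.hasSum_ofReal.2 hc
  have hpi : (Real.pi : ℂ) ≠ 0 := by exact_mod_cast Real.pi_ne_zero
  have he := hs.unique (a₂ := ((16 * (u ^ 2 - 1 / 4) * ∑' n, ct (u ^ 2) n : ℝ) : ℂ)) (by
    refine hasSum_conv hc' (fun n => ?_) rfl
    unfold ct
    push_cast
    rw [mul_div_assoc']
    congr 1 <;> ring)
  apply mul_left_cancel₀ hpi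
  rw [he]
  unfold cc
  push_cast
  field_simp

/-! ### Connection with `w`, `K` and `η` -/

theorem Ups_sq {ν : ℝ} (hν : ν ∈ Set.Icc (0 : ℝ) 1) : Ups ν ^ 2 = 1 - ν ^ 2 := by
  unfold Ups
  rw [Real.sq_sqrt]
  nlinarith [hν.1, hν.2]

theorem Ups_mem {ν : ℝ} (hν : ν ∈ Set.Icc (0 : ℝ) 1) : 0 ≤ Ups ν ∧ Ups ν ≤ 1 := by
  have h0 : 0 ≤ Ups ν := Real.sqrt_nonneg _
  refine ⟨h0, ?_⟩
  have := Ups_sq hν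
  nlinarith [sq_nonneg ν]

theorem Fc_ofReal {u : ℝ} (hu : u ≠ 0) : Fc u = ((u * Real.cot (Real.pi * u / 2) : ℝ) : ℂ) := by
  unfold Fc
  rw [if_neg (by exact_mod_cast hu)]
  push_cast
  rfl

theorem Fc_Ups {ν : ℝ} (hν : ν ∈ Set.Icc (0 : ℝ) 1) : Fc (Ups ν) = (w ν : ℂ) := by
  unfold w
  by_cases h : ν = 1
  · subst h
    have : Ups 1 = 0 := by simp [Ups]
    rw [this]
    simp [Fc]
  · have h2 := Ups_sq hν
    have h1 : ν < 1 := lt_of_le_of_ne hν.2 h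
    have h0 : Ups ν ≠ 0 := by
      intro h3
      rw [h3] at h2
      nlinarith [hν.1]
    rw [if_neg h, Fc_ofReal h0]

theorem w_nonneg {ν : ℝ} (hν : ν ∈ Set.Icc (0 : ℝ) 1) : 0 ≤ w ν := by
  unfold w
  split_ifs
  · have := Real.pi_pos
    positivity
  · obtain ⟨h0, h1⟩ := Ups_mem hν
    have hp := Real.pi_pos
    apply mul_nonneg h0
    rw [Real.cot_eq_cos_div_sin]
    apply div_nonneg
    · apply Real.cos_nonneg_of_neg_pi_div_two_le_of_le
      · have : 0 ≤ Real.pi * Ups ν / 2 := by positivity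
        linarith
      · nlinarith
    · apply Real.sin_nonneg_of_nonneg_of_le_pi
      · positivity
      · nlinarith

theorem cot_pi_four : Real.cot (Real.pi / 4) = 1 := by
  rw [Real.cot_eq_cos_div_sin, Real.cos_pi_div_four, Real.sin_pi_div_four, div_self]
  positivity

theorem Fc_half : Fc (1 / 2) = ((1 / 2 : ℝ) : ℂ) := by
  have h := Fc_ofReal (u := 1 / 2) (by norm_num)
  have e : Real.pi * (1 / 2) / 2 = Real.pi / 4 := by ring
  rw [e, cot_pi_four] at h
  push_cast at h ⊢
  rw [h]; norm_num

theorem half_sub_w {ν : ℝ} (hν : ν ∈ Set.Icc (0 : ℝ) 1) :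
    1 / 2 - w ν = cc (1 - ν ^ 2) * (3 / 4 - ν ^ 2) := by
  obtain ⟨h0, h1⟩ := Ups_mem hν
  have h := Fc_half_sub h0 h1
  rw [Fc_half, Fc_Ups hν, Ups_sq hν] at h
  have h' : 1 / 2 - w ν = cc (1 - ν ^ 2) * (1 - ν ^ 2 - 1 / 4) := by exact_mod_cast h
  rw [h']; ring

theorem Fc_line (τ : ℝ) : Fc (1 / 2 - Complex.I * τ) =
    (1 / 2 - Complex.I * τ) * ((1 + Complex.I * Real.sinh (Real.pi * τ)) / Real.cosh (Real.pi * τ)) := by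
  have hre : (1 / 2 - Complex.I * τ : ℂ).re = 1 / 2 := by simp
  have h0 : (1 / 2 - Complex.I * τ : ℂ) ≠ 0 := by
    intro h; rw [h] at hre; norm_num at hre
  unfold Fc
  rw [if_neg h0]
  congr 1
  set θ : ℂ := Real.pi * (1 / 2 - Complex.I * τ) / 2 with hθ
  have hch : (Complex.cosh (Real.pi * τ)) ≠ 0 := by
    have : Complex.cosh (Real.pi * τ) = ((Real.cosh (Real.pi * τ) : ℝ) : ℂ) := by push_cast; rfl
    rw [this]
    exact_mod_cast (Real.cosh_pos _).ne'
  have h2 : 2 * θ = Real.pi / 2 - (Real.pi * τ) * Complex.I := by rw [hθ]; ring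
  have hs : Complex.sin (2 * θ) = Complex.cosh (Real.pi * τ) := by
    rw [h2, Complex.sin_pi_div_two_sub, Complex.cos_mul_I]
  have hc : Complex.cos (2 * θ) = Complex.sinh (Real.pi * τ) * Complex.I := by
    rw [h2, Complex.cos_pi_div_two_sub, Complex.sin_mul_I]
  have hsin : Complex.sin θ ≠ 0 := by
    intro h
    rw [Complex.sin_two_mul, h] at hs
    apply hch; rw [← hs]; ring
  have hcos : Complex.cos θ ≠ 0 := by
    intro h
    rw [Complex.sin_two_mul, h] at hs
    apply hch; rw [← hs]; ring
  push_cast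
  rw [Complex.cot_eq_cos_div_sin, div_eq_div_iff hsin hch, ← hs, Complex.sin_two_mul]
  have : Complex.I * Complex.sinh (Real.pi * τ) = 2 * Complex.cos θ ^ 2 - 1 := by
    rw [mul_comm, ← hc, Complex.cos_two_mul]
  rw [this]; ring

theorem Kf_eq {ν : ℝ} (hν : ν ∈ Set.Icc (0 : ℝ) 1) (τ : ℝ) :
    Kf ν τ * (1 + 4 * τ ^ 2) = 4 * ‖Fc (1 / 2 - Complex.I * τ) - Fc (Ups ν)‖ ^ 2 := by
  have hp : (1 + 4 * τ ^ 2) ≠ 0 := by positivity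
  unfold Kf
  rw [div_mul_cancel₀ _ hp, Fc_line, Fc_Ups hν, Complex.sq_norm, Complex.normSq_apply,
    Real.tanh_eq_sinh_div_cosh]
  have hc := (Real.cosh_pos (Real.pi * τ)).ne'
  have hcs := Real.cosh_sq (Real.pi * τ)
  set C := Real.cosh (Real.pi * τ)
  set S := Real.sinh (Real.pi * τ)
  have e : (1 / 2 - Complex.I * τ) * ((1 + Complex.I * (S : ℂ)) / (C : ℂ)) - (w ν : ℂ)
     = (((1 / 2 + τ * S) / C - w ν : ℝ) : ℂ) + (((S / 2 - τ) / C : ℝ) : ℂ) * Complex.I := by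
    have hc' : (C : ℂ) ≠ 0 := by exact_mod_cast hc
    push_cast
    field_simp
    linear_combination (-2 * (τ : ℂ) * S) * Complex.I_sq
  rw [e]
  simp only [Complex.add_re, Complex.ofReal_re, Complex.re_ofReal_mul, Complex.I_re, mul_zero,
    add_zero, Complex.add_im, Complex.ofReal_im, Complex.im_ofReal_mul, Complex.I_im, mul_one,
    zero_add]
  field_simp
  linear_combination (4 * (1 + 4 * τ ^ 2)) * hcs

theorem Kf_le_one {ν : ℝ} (hν : ν ∈ Set.Icc (0 : ℝ) 1) (τ : ℝ) :
    Kf ν τ * (1 + 4 * τ ^ 2) ≤ 4 * τ ^ 2 + (1 - 2 * w ν) ^ 2 := by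
  have hp : (1 + 4 * τ ^ 2) ≠ 0 := by positivity
  have hw := w_nonneg hν
  unfold Kf
  rw [div_mul_cancel₀ _ hp, Real.tanh_eq_sinh_div_cosh]
  have key : 1 ≤ 1 / Real.cosh (Real.pi * τ)
      + 2 * τ * (Real.sinh (Real.pi * τ) / Real.cosh (Real.pi * τ)) := by
    have hC := Real.cosh_pos (Real.pi * τ)
    rw [← sub_nonneg]
    have : 1 / Real.cosh (Real.pi * τ) + 2 * τ * (Real.sinh (Real.pi * τ) / Real.cosh (Real.pi * τ))
      - 1 = (1 + 2 * τ * Real.sinh (Real.pi * τ) - Real.cosh (Real.pi * τ))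
        / Real.cosh (Real.pi * τ) := by field_simp
    rw [this]
    apply div_nonneg _ hC.le
    have e : Real.pi * τ = 2 * (Real.pi * τ / 2) := by ring
    rw [e, Real.cosh_two_mul, Real.sinh_two_mul]
    have hcs := Real.cosh_sq (Real.pi * τ / 2)
    have hCy := Real.cosh_pos (Real.pi * τ / 2)
    have hpi : Real.pi ≤ 4 := Real.pi_le_four
    have hpp := Real.pi_pos
    set y := Real.pi * τ / 2 with hy
    have hτ : τ = 2 * y / Real.pi := by rw [hy]; field_simp
    have h1 : Real.sinh y ^ 2 ≤ y * Real.cosh y * Real.sinh y := by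
      have hder : ∀ y : ℝ, 0 ≤ y → Real.sinh y ≤ y * Real.cosh y := by
        have hm : MonotoneOn (fun y : ℝ => y * Real.cosh y - Real.sinh y) (Set.Ici 0) := by
          apply monotoneOn_of_deriv_nonneg (convex_Ici 0)
          · fun_prop
          · fun_prop
          · intro x hx
            rw [interior_Ici] at hx
            have hd : HasDerivAt (fun y : ℝ => y * Real.cosh y - Real.sinh y)
                (1 * Real.cosh x + x * Real.sinh x - Real.cosh x) x :=
              ((hasDerivAt_id x).mul (Real.hasDerivAt_cosh x)).sub (Real.hasDerivAt_sinh x)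
            rw [hd.deriv]
            have : 0 ≤ Real.sinh x := Real.sinh_nonneg_iff.2 (le_of_lt hx)
            have hx' : 0 ≤ x := le_of_lt hx
            nlinarith [mul_nonneg hx' this]
        intro y hy
        have := hm (Set.mem_Ici.2 (le_refl 0)) (Set.mem_Ici.2 hy) hy
        simp at this
        linarith
      rcases le_total 0 y with hy0 | hy0
      · have a := hder y hy0
        have b := Real.sinh_nonneg_iff.2 hy0
        nlinarith
      · have a := hder (-y) (by linarith)
        rw [Real.sinh_neg, Real.cosh_neg] at a
        have b := Real.sinh_nonpos_iff.2 hy0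
        nlinarith
    have h2 : y * Real.cosh y * Real.sinh y ≤ 2 * τ * Real.cosh y * Real.sinh y := by
      have hys : 0 ≤ y * Real.cosh y * Real.sinh y := le_trans (sq_nonneg _) h1
      have : 2 * τ * Real.cosh y * Real.sinh y = (4 / Real.pi) * (y * Real.cosh y * Real.sinh y) := by
        rw [hτ]; ring
      rw [this]
      have : 1 ≤ 4 / Real.pi := by rw [le_div_iff₀ hpp]; linarith
      nlinarith
    nlinarith
  nlinarith

/-! ### Bounds for the constant `cc` -/

theorem ct_mono {v v' : ℝ} (h : v ≤ v') (hv : v' ≤ 1) (n : ℕ) : ct v n ≤ ct v' n := by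
  have := one_le_sq n
  unfold ct
  have p1 : 0 < 4 * ((n : ℝ) + 1) ^ 2 - 1 / 4 := by linarith
  have p2 : 0 < 4 * ((n : ℝ) + 1) ^ 2 - v' := by linarith
  gcongr

theorem cc_mono {v v' : ℝ} (h : v ≤ v') (hv : v' ≤ 1) : cc v ≤ cc v' := by
  unfold cc
  have hp := Real.pi_pos
  apply mul_le_mul_of_nonneg_left _ (by positivity)
  exact (ct_summable (h.trans hv)).tsum_le_tsum (ct_mono h hv) (ct_summable hv)

theorem cc_nonneg {v : ℝ} (hv : v ≤ 1) : 0 ≤ cc v := by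
  unfold cc
  have hp := Real.pi_pos
  exact mul_nonneg (by positivity) (tsum_nonneg (ct_nonneg hv))

theorem cc_one : cc 1 = 2 / 3 := by
  have h := half_sub_w (ν := 0) (by simp)
  have h0 : w 0 = 0 := by
    simp [w, Ups, Real.cot_eq_cos_div_sin]
  rw [h0] at h
  norm_num at h
  linarith

noncomputable def gt (n : ℕ) : ℝ := if n = 0 then 1 / 10 else 1 / (30 * (2 * (n : ℝ) + 1))

theorem gt_nonneg (n : ℕ) : 0 ≤ gt n := by
  unfold gt; split_ifs <;> positivity

theorem gt_step (n : ℕ) :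
    1 / ((4 * ((n : ℝ) + 1) ^ 2 - 1) * (4 * ((n : ℝ) + 1) ^ 2 - 1 / 4)) ≤ gt n - gt (n + 1) := by
  rcases Nat.eq_zero_or_pos n with h | h
  · subst h; norm_num [gt]
  · unfold gt
    rw [if_neg h.ne', if_neg (Nat.succ_ne_zero n)]
    have h1 : (1 : ℝ) ≤ n := by exact_mod_cast h
    push_cast
    have e : 1 / (30 * (2 * (n : ℝ) + 1)) - 1 / (30 * (2 * ((n : ℝ) + 1) + 1))
      = 1 / ((4 * ((n : ℝ) + 1) ^ 2 - 1) * 15) := by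
      have : 4 * ((n : ℝ) + 1) ^ 2 - 1 = (2 * n + 1) * (2 * (n + 1) + 1) := by ring
      rw [this]
      field_simp
      ring
    rw [e]
    have : 0 < 4 * ((n : ℝ) + 1) ^ 2 - 1 := by nlinarith
    apply one_div_le_one_div_of_le (by positivity)
    apply mul_le_mul_of_nonneg_left _ this.le
    nlinarith

theorem cc_lower {ν : ℝ} (hν : ν ∈ Set.Icc (0 : ℝ) 1) : 10 / (15 + 4 * ν ^ 2) ≤ cc (1 - ν ^ 2) := by
  have hn : 0 ≤ ν ^ 2 := sq_nonneg ν
  have hn1 : ν ^ 2 ≤ 1 := by nlinarith [hν.1, hν.2]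
  have hv : 1 - ν ^ 2 ≤ 1 := by linarith
  have s1 := ct_summable (le_refl (1 : ℝ))
  have s2 := ct_summable hv
  have hsum : ∑' n, (ct 1 n - ct (1 - ν ^ 2) n) ≤ ν ^ 2 / (3 + ν ^ 2) * (1 / 10) := by
    apply Real.tsum_le_of_sum_range_le
    · intro n; linarith [ct_mono hv (le_refl 1) n]
    · intro N
      have hstep : ∀ n, ct 1 n - ct (1 - ν ^ 2) n
          ≤ ν ^ 2 / (3 + ν ^ 2) * (gt n - gt (n + 1)) := by
        intro n
        refine le_trans ?_ (mul_le_mul_of_nonneg_left (gt_step n) (by positivity))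
        have hm := one_le_sq n
        unfold ct
        set m := ((n : ℝ) + 1) ^ 2
        have p1 : 0 < 4 * m - 1 := by linarith
        have p2 : 0 < 4 * m - 1 / 4 := by linarith
        have p3 : 0 < 4 * m - (1 - ν ^ 2) := by linarith
        have e : m / ((4 * m - 1) * (4 * m - 1 / 4)) - m / ((4 * m - (1 - ν ^ 2)) * (4 * m - 1 / 4))
          = (m * ν ^ 2 / (4 * m - (1 - ν ^ 2))) * (1 / ((4 * m - 1) * (4 * m - 1 / 4))) := by
          have hq : 4 * m - (1 - ν ^ 2) = (4 * m - 1) + ν ^ 2 := by ring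
          rw [hq] at p3 ⊢
          generalize 4 * m - 1 = p at *
          generalize 4 * m - 1 / 4 = r at *
          field_simp
          ring
        rw [e]
        apply mul_le_mul_of_nonneg_right
        · rw [div_le_div_iff₀ p3 (by linarith)]
          nlinarith [mul_nonneg hn (mul_nonneg (sub_nonneg.2 hm) (sub_nonneg.2 hn1))]
        · apply le_of_lt; apply one_div_pos.2; exact mul_pos p1 p2
      calc ∑ n ∈ Finset.range N, (ct 1 n - ct (1 - ν ^ 2) n)
          ≤ ∑ n ∈ Finset.range N, ν ^ 2 / (3 + ν ^ 2) * (gt n - gt (n + 1)) :=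
            Finset.sum_le_sum (fun n _ => hstep n)
        _ = ν ^ 2 / (3 + ν ^ 2) * (gt 0 - gt N) := by
            rw [← Finset.mul_sum, Finset.sum_range_sub']
        _ ≤ _ := by
            apply mul_le_mul_of_nonneg_left _ (by positivity)
            have := gt_nonneg N
            have : gt 0 = 1 / 10 := by simp [gt]
            linarith
  rw [s1.tsum_sub s2] at hsum
  have hpi : 0 < Real.pi := Real.pi_pos
  have hd : cc 1 - cc (1 - ν ^ 2) ≤ 16 / Real.pi * (ν ^ 2 / (3 + ν ^ 2) * (1 / 10)) := by
    unfold cc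
    rw [← mul_sub]
    exact mul_le_mul_of_nonneg_left hsum (by positivity)
  have hpi2 : 16 / Real.pi ≤ 5.1 := by
    rw [div_le_iff₀ hpi]
    have := Real.pi_gt_d2
    nlinarith
  have hd2 : 16 / Real.pi * (ν ^ 2 / (3 + ν ^ 2) * (1 / 10))
      ≤ 5.1 * (ν ^ 2 / (3 + ν ^ 2) * (1 / 10)) :=
    mul_le_mul_of_nonneg_right hpi2 (by positivity)
  have hd3 : 10 / (15 + 4 * ν ^ 2) ≤ 2 / 3 - 5.1 * (ν ^ 2 / (3 + ν ^ 2) * (1 / 10)) := by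
    rw [div_le_iff₀ (by positivity)]
    have : (2 / 3 - 5.1 * (ν ^ 2 / (3 + ν ^ 2) * (1 / 10))) * (15 + 4 * ν ^ 2) - 10
      = ν ^ 2 * (0.35 + (8 / 3 - 2.04) * ν ^ 2) / (3 + ν ^ 2) := by
      field_simp
      ring
    have h2 : 0 ≤ ν ^ 2 * (0.35 + (8 / 3 - 2.04) * ν ^ 2) / (3 + ν ^ 2) := by
      apply div_nonneg _ (by positivity)
      apply mul_nonneg hn
      nlinarith
    linarith
  rw [cc_one] at hd
  linarith

theorem cc_quarter : cc (1 / 4) ≤ (Real.pi - 2) / 2 := by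
  have hf : HasDerivAt (fun v : ℝ => v * (Real.cos (Real.pi * v / 2) / Real.sin (Real.pi * v / 2)))
      (1 - Real.pi / 2) (1 / 2) := by
    have hl : HasDerivAt (fun v : ℝ => Real.pi * v / 2) (Real.pi / 2) (1 / 2) := by
      have := ((hasDerivAt_id (1 / 2 : ℝ)).const_mul Real.pi).div_const 2
      simpa using this
    have e : Real.pi * (1 / 2) / 2 = Real.pi / 4 := by ring
    have hs : Real.sin (Real.pi * (1 / 2) / 2) ≠ 0 := by
      rw [e, Real.sin_pi_div_four]; positivity
    have := (hasDerivAt_id (1 / 2 : ℝ)).mul (hl.cos.div hl.sin hs)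
    refine this.congr_deriv ?_
    simp only [id, Pi.div_apply]
    rw [e, Real.sin_pi_div_four, Real.cos_pi_div_four]
    have h0 : Real.sqrt 2 ≠ 0 := by positivity
    field_simp
    ring
  have hF : ∀ v : ℝ, 1 / 2 < v → v ≤ 1 →
      1 / 2 - v * (Real.cos (Real.pi * v / 2) / Real.sin (Real.pi * v / 2))
        = cc (v ^ 2) * (v ^ 2 - 1 / 4) := by
    intro v h1 h2
    have h := Fc_half_sub (u := v) (by linarith) h2
    rw [Fc_half, Fc_ofReal (by linarith), Real.cot_eq_cos_div_sin] at h
    exact_mod_cast h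
  have e : Real.pi * (1 / 2) / 2 = Real.pi / 4 := by ring
  have hval : (1 / 2 : ℝ) * (Real.cos (Real.pi * (1 / 2) / 2) / Real.sin (Real.pi * (1 / 2) / 2))
      = 1 / 2 := by
    rw [← Real.cot_eq_cos_div_sin, e, cot_pi_four]; norm_num
  have ht := (hasDerivAt_iff_tendsto_slope.1 hf).mono_left
    (nhdsWithin_mono (1 / 2 : ℝ) (s := Set.Ioi (1 / 2)) (fun x hx => ne_of_gt hx))
  have hle : 1 - Real.pi / 2 ≤ - cc (1 / 4) := by
    refine le_of_tendsto ht ?_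
    have hmem : Set.Ioc (1 / 2 : ℝ) 1 ∈ nhdsWithin (1 / 2 : ℝ) (Set.Ioi (1 / 2)) :=
      Ioc_mem_nhdsGT (by norm_num)
    filter_upwards [hmem] with v hv
    have h := hF v hv.1 hv.2
    rw [slope_def_field, hval, div_le_iff₀ (by linarith [hv.1])]
    have h1 : cc (1 / 4) ≤ cc (v ^ 2) := cc_mono (by nlinarith [hv.1]) (by nlinarith [hv.1, hv.2])
    have h0 : 0 ≤ cc (1 / 4) := cc_nonneg (by norm_num)
    have h2 : cc (1 / 4) * (v ^ 2 - 1 / 4) ≤ cc (v ^ 2) * (v ^ 2 - 1 / 4) :=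
      mul_le_mul_of_nonneg_right h1 (by nlinarith [hv.1])
    have h3 : cc (1 / 4) * (v - 1 / 2) ≤ cc (1 / 4) * (v ^ 2 - 1 / 4) :=
      mul_le_mul_of_nonneg_left (by nlinarith [hv.1]) h0
    linarith
  linarith

/-! ### Facts about `η` -/

theorem sqrt_facts {ν : ℝ} (hν : ν ∈ Set.Icc (0 : ℝ) 1) :
    Real.sqrt (9 + 4 * ν ^ 2) ^ 2 = 9 + 4 * ν ^ 2 ∧ 3 + 3 / 5 * ν ^ 2 ≤ Real.sqrt (9 + 4 * ν ^ 2) := by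
  refine ⟨Real.sq_sqrt (by positivity), ?_⟩
  apply Real.le_sqrt_of_sq_le
  have hn : 0 ≤ ν ^ 2 := sq_nonneg ν
  have hn1 : ν ^ 2 ≤ 1 := by nlinarith [hν.1, hν.2]
  nlinarith

theorem nu_sq_of_ne {ν : ℝ} (hν : ν ∈ Set.Icc (0 : ℝ) 1) (h : ν ≠ Real.sqrt 3 / 2) :
    3 / 4 - ν ^ 2 ≠ 0 := by
  intro h2
  apply h
  have h3 : Real.sqrt 3 ^ 2 = 3 := Real.sq_sqrt (by norm_num)
  have h0 : 0 ≤ Real.sqrt 3 := Real.sqrt_nonneg 3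
  have : (ν - Real.sqrt 3 / 2) * (ν + Real.sqrt 3 / 2) = 0 := by nlinarith
  rcases mul_eq_zero.1 this with h4 | h4
  · linarith
  · have := hν.1
    nlinarith

theorem nu_sq_of_eq {ν : ℝ} (h : ν = Real.sqrt 3 / 2) : ν ^ 2 = 3 / 4 := by
  have h3 : Real.sqrt 3 ^ 2 = 3 := Real.sq_sqrt (by norm_num)
  rw [h, div_pow, h3]; norm_num

theorem sqrt_of_eq {ν : ℝ} (h : ν = Real.sqrt 3 / 2) :
    Real.sqrt (9 + 4 * ν ^ 2) = 2 * Real.sqrt 3 := by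
  rw [nu_sq_of_eq h]
  have h3 : Real.sqrt 3 ^ 2 = 3 := Real.sq_sqrt (by norm_num)
  rw [show (9 + 4 * (3 / 4) : ℝ) = (2 * Real.sqrt 3) ^ 2 by rw [mul_pow, h3]; norm_num]
  exact Real.sqrt_sq (by positivity)

theorem cc_pos {ν : ℝ} (hν : ν ∈ Set.Icc (0 : ℝ) 1) : 0 < cc (1 - ν ^ 2) :=
  lt_of_lt_of_le (by positivity) (cc_lower hν)

theorem eta_facts {ν : ℝ} (hν : ν ∈ Set.Icc (0 : ℝ) 1) :
    0 < eta ν ∧ eta ν * (cc (1 - ν ^ 2) * (Real.sqrt (9 + 4 * ν ^ 2) + 4 * ν)) ≤ 2 ∧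
    eta ν ^ 2 * (1 - 2 * w ν) ^ 2 = (Real.sqrt (9 + 4 * ν ^ 2) - 4 * ν) ^ 2 / 9 := by
  obtain ⟨hq2, hq3⟩ := sqrt_facts hν
  have hc := cc_pos hν
  have hw := half_sub_w hν
  have hν0 := hν.1
  by_cases h : ν = Real.sqrt 3 / 2
  · have e1 := nu_sq_of_eq h
    have e2 := sqrt_of_eq h
    have hs3 : 0 < Real.sqrt 3 := by positivity
    have hpi : 0 < Real.pi - 2 := by linarith [Real.pi_gt_three]
    have heta : eta ν = 1 / (Real.sqrt 3 * (Real.pi - 2)) := by unfold eta; rw [if_pos h]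
    refine ⟨?_, ?_, ?_⟩
    · rw [heta]; positivity
    · rw [heta, e2, e1, h]
      have hcq := cc_quarter
      rw [show (1 - 3 / 4 : ℝ) = 1 / 4 by norm_num]
      rw [div_mul_eq_mul_div, div_le_iff₀ (by positivity)]
      nlinarith
    · rw [e1] at hw
      have : w ν = 1 / 2 := by nlinarith
      rw [this, e2, h]; ring
  · have hd := nu_sq_of_ne hν h
    have heta : eta ν = (Real.sqrt (9 + 4 * ν ^ 2) - 4 * ν) / (3 * (1 - 2 * w ν)) := by
      unfold eta; rw [if_neg h]
    have hw2 : 1 - 2 * w ν = 2 * (cc (1 - ν ^ 2) * (3 / 4 - ν ^ 2)) := by linarith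
    rw [heta, hw2]
    set q := Real.sqrt (9 + 4 * ν ^ 2)
    set c := cc (1 - ν ^ 2)
    have hQ : 0 < q + 4 * ν := by nlinarith
    have hqm : q - 4 * ν = 12 * (3 / 4 - ν ^ 2) / (q + 4 * ν) := by
      rw [eq_div_iff hQ.ne']; nlinarith
    have he : (q - 4 * ν) / (3 * (2 * (c * (3 / 4 - ν ^ 2)))) = 2 / (c * (q + 4 * ν)) := by
      rw [hqm]
      generalize 3 / 4 - ν ^ 2 = d at *
      field_simp
      ring
    refine ⟨?_, ?_, ?_⟩
    · rw [he]; positivity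
    · rw [he, div_mul_cancel₀ _ (by positivity)]
    · have : 3 * (2 * (c * (3 / 4 - ν ^ 2))) ≠ 0 := by
        have := hc.ne'
        positivity
      generalize 3 / 4 - ν ^ 2 = d at *
      field_simp
      ring

theorem eta_upper {ν : ℝ} (hν : ν ∈ Set.Icc (0 : ℝ) 1) :
    eta ν ^ 2 * (3 + 4 * ν + 3 / 5 * ν ^ 2) ^ 2 ≤ (3 + 4 / 5 * ν ^ 2) ^ 2 := by
  obtain ⟨h0, h1, -⟩ := eta_facts hν
  obtain ⟨hq2, hq3⟩ := sqrt_facts hν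
  have hν0 := hν.1
  have hl := cc_lower hν
  rw [← mul_pow]
  apply pow_le_pow_left₀ (by positivity)
  have h2 : eta ν * (10 / (15 + 4 * ν ^ 2) * (3 + 4 * ν + 3 / 5 * ν ^ 2)) ≤ 2 := by
    refine le_trans ?_ h1
    apply mul_le_mul_of_nonneg_left _ h0.le
    apply mul_le_mul hl (by linarith) (by positivity) (cc_pos hν).le
  have e : eta ν * (10 / (15 + 4 * ν ^ 2) * (3 + 4 * ν + 3 / 5 * ν ^ 2))
    = (10 * (eta ν * (3 + 4 * ν + 3 / 5 * ν ^ 2))) / (15 + 4 * ν ^ 2) := by ring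
  rw [e, div_le_iff₀ (by positivity)] at h2
  linarith

theorem eta_sq_small {ν : ℝ} (h0 : 0 ≤ ν) (h3 : ν ≤ 3 / 10) : eta ν ^ 2 ≤ 1 - 159 / 100 * ν := by
  have hu := eta_upper (ν := ν) ⟨h0, by linarith⟩
  have hp : 0 < (3 + 4 * ν + 3 / 5 * ν ^ 2) ^ 2 := by positivity
  have key : (3 + 4 / 5 * ν ^ 2) ^ 2
      ≤ (1 - 159 / 100 * ν) * (3 + 4 * ν + 3 / 5 * ν ^ 2) ^ 2 := by
    have e : (1 - 159 / 100 * ν) * (3 + 4 * ν + 3 / 5 * ν ^ 2) ^ 2 - (3 + 4 / 5 * ν ^ 2) ^ 2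
      = ν * ((32300 / 27) * (ν - 0) ^ 0 * (3 / 10 - ν) ^ 4
        + (3920) * (ν - 0) ^ 1 * (3 / 10 - ν) ^ 3
        + (193018 / 45) * (ν - 0) ^ 2 * (3 / 10 - ν) ^ 2
        + (1064738 / 675) * (ν - 0) ^ 3 * (3 / 10 - ν) ^ 1
        + (252721 / 22500) * (ν - 0) ^ 4 * (3 / 10 - ν) ^ 0) := by ring
    have a1 : 0 ≤ ν - 0 := by linarith
    have a2 : 0 ≤ 3 / 10 - ν := by linarith
    have : 0 ≤ ν * ((32300 / 27) * (ν - 0) ^ 0 * (3 / 10 - ν) ^ 4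
        + (3920) * (ν - 0) ^ 1 * (3 / 10 - ν) ^ 3
        + (193018 / 45) * (ν - 0) ^ 2 * (3 / 10 - ν) ^ 2
        + (1064738 / 675) * (ν - 0) ^ 3 * (3 / 10 - ν) ^ 1
        + (252721 / 22500) * (ν - 0) ^ 4 * (3 / 10 - ν) ^ 0) := by positivity
    linarith
  exact le_of_mul_le_mul_right (hu.trans key) hp

theorem eta_sq_large {ν : ℝ} (h3 : 3 / 10 ≤ ν) (h1 : ν ≤ 1) :
    eta ν ^ 2 ≤ 645 / 1000 - 39 / 100 * ν := by
  have hu := eta_upper (ν := ν) ⟨by linarith, h1⟩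
  have h0 : 0 ≤ ν := by linarith
  have hp : 0 < (3 + 4 * ν + 3 / 5 * ν ^ 2) ^ 2 := by positivity
  have key : (3 + 4 / 5 * ν ^ 2) ^ 2
      ≤ (645 / 1000 - 39 / 100 * ν) * (3 + 4 * ν + 3 / 5 * ν ^ 2) ^ 2 := by
    have e : (645 / 1000 - 39 / 100 * ν) * (3 + 4 * ν + 3 / 5 * ν ^ 2) ^ 2 - (3 + 4 / 5 * ν ^ 2) ^ 2
      = (7361028 / 10504375) * (ν - 3 / 10) ^ 0 * (1 - ν) ^ 5
        + (364720851 / 8403500) * (ν - 3 / 10) ^ 1 * (1 - ν) ^ 4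
        + (61571514 / 420175) * (ν - 3 / 10) ^ 2 * (1 - ν) ^ 3
        + (14377704 / 84035) * (ν - 3 / 10) ^ 3 * (1 - ν) ^ 2
        + (1161584 / 16807) * (ν - 3 / 10) ^ 4 * (1 - ν) ^ 1
        + (28880 / 16807) * (ν - 3 / 10) ^ 5 * (1 - ν) ^ 0 := by ring
    have a1 : 0 ≤ ν - 3 / 10 := by linarith
    have a2 : 0 ≤ 1 - ν := by linarith
    have : 0 ≤ (7361028 / 10504375) * (ν - 3 / 10) ^ 0 * (1 - ν) ^ 5
        + (364720851 / 8403500) * (ν - 3 / 10) ^ 1 * (1 - ν) ^ 4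
        + (61571514 / 420175) * (ν - 3 / 10) ^ 2 * (1 - ν) ^ 3
        + (14377704 / 84035) * (ν - 3 / 10) ^ 3 * (1 - ν) ^ 2
        + (1161584 / 16807) * (ν - 3 / 10) ^ 4 * (1 - ν) ^ 1
        + (28880 / 16807) * (ν - 3 / 10) ^ 5 * (1 - ν) ^ 0 := by positivity
    linarith
  exact le_of_mul_le_mul_right (hu.trans key) hp

/-! ### The scalar inequalities -/

/-- The characteristic polynomial inequality for large `x` or small `ν`. -/
theorem regionII {ν x a b lam H t : ℝ} (hx : 0 ≤ x)
    (ha : a = 1 - lam) (hb : b = 1 - H) (ha0 : 0 ≤ a) (hb0 : 0 ≤ b)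
    (hrel : 9 * a ^ 2 + 16 * ν ^ 4 = 8 * ν ^ 2 * (8 - 5 * a))
    (ht : t * (1 + x) ≤ lam + H * x)
    (hq : 0 ≤ b ^ 2 * x ^ 2 + (9 * b ^ 2 + 2 * a * b - 8 * ν ^ 2 * (1 + H)) * x
      + (18 * a * b + a ^ 2 + 16 * ν ^ 4 - 8 * ν ^ 2 * (1 - a + 5 * H + 4))) :
    t ≤ 1 ∧ 0 ≤ (1 + x) * (9 + x) * (1 - t) ^ 2 + 16 * ν ^ 4
      - 8 * ν ^ 2 * ((5 + x) * t + 3 + x) := by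
  have hx1 : 0 < 1 + x := by linarith
  set s := (lam + H * x) / (1 + x) with hs
  have hts : t ≤ s := by rw [hs, le_div_iff₀ hx1]; exact ht
  have hs1 : s ≤ 1 := by
    rw [hs, div_le_one hx1]; nlinarith
  have hsx : s * (1 + x) = lam + H * x := by rw [hs, div_mul_cancel₀ _ hx1.ne']
  have hGs : 0 ≤ (1 + x) * (9 + x) * (1 - s) ^ 2 + 16 * ν ^ 4
      - 8 * ν ^ 2 * ((5 + x) * s + 3 + x) := by
    have e : ((1 + x) * (9 + x) * (1 - s) ^ 2 + 16 * ν ^ 4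
      - 8 * ν ^ 2 * ((5 + x) * s + 3 + x)) * (1 + x) = x * (b ^ 2 * x ^ 2 +
      (9 * b ^ 2 + 2 * a * b - 8 * ν ^ 2 * (1 + H)) * x
      + (18 * a * b + a ^ 2 + 16 * ν ^ 4 - 8 * ν ^ 2 * (1 - a + 5 * H + 4))) := by
      have h1 : (1 - s) * (1 + x) = a + b * x := by rw [ha, hb]; linarith
      have : ((1 + x) * (9 + x) * (1 - s) ^ 2 + 16 * ν ^ 4
        - 8 * ν ^ 2 * ((5 + x) * s + 3 + x)) * (1 + x) =
        (9 + x) * ((1 - s) * (1 + x)) ^ 2 + 16 * ν ^ 4 * (1 + x)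
        - 8 * ν ^ 2 * ((5 + x) * (s * (1 + x)) + (3 + x) * (1 + x)) := by ring
      rw [this, h1, hsx]
      have hl : lam = 1 - a := by linarith
      have hH : H = 1 - b := by linarith
      rw [hl, hH]
      linear_combination hrel
    have h2 : 0 ≤ ((1 + x) * (9 + x) * (1 - s) ^ 2 + 16 * ν ^ 4
      - 8 * ν ^ 2 * ((5 + x) * s + 3 + x)) * (1 + x) := by rw [e]; exact mul_nonneg hx hq
    exact nonneg_of_mul_nonneg_left h2 hx1
  refine ⟨hts.trans hs1, hGs.trans ?_⟩
  have h3 : (1 - s) ^ 2 ≤ (1 - t) ^ 2 := by nlinarith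
  have h4 : (1 + x) * (9 + x) * (1 - s) ^ 2 ≤ (1 + x) * (9 + x) * (1 - t) ^ 2 :=
    mul_le_mul_of_nonneg_left h3 (by positivity)
  have h5 : 8 * ν ^ 2 * ((5 + x) * t) ≤ 8 * ν ^ 2 * ((5 + x) * s) :=
    mul_le_mul_of_nonneg_left (mul_le_mul_of_nonneg_left hts (by linarith)) (by positivity)
  linarith

set_option maxHeartbeats 1000000 in
/-- The characteristic polynomial inequality for small `x`. -/
theorem regionI {ν x q t : ℝ} (h0 : 0 ≤ ν) (h1 : ν ≤ 1) (hx : 0 ≤ x) (hxν : 1 + x ≤ 16 * ν ^ 2)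
    (hq2 : q ^ 2 = 9 + 4 * ν ^ 2) (hq3 : 3 ≤ q)
    (ht : t * ((q + 4 * ν) ^ 2 * (1 + x)) ≤ (3 - 4 * ν ^ 2 + x) ^ 2 + 4 * x) :
    0 ≤ 2 * ((1 + x) * (9 + x)) * (1 - t) + 8 * ν ^ 2 * (5 + x) ∧
    0 ≤ (1 + x) * (9 + x) * (1 - t) ^ 2 + 16 * ν ^ 4
      - 8 * ν ^ 2 * ((5 + x) * t + 3 + x) := by
  obtain ⟨e, he⟩ : ∃ e, e = 20 * ν ^ 2 + 8 * ν * q := ⟨_, rfl⟩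
  have hQ : (q + 4 * ν) ^ 2 = 9 + e := by rw [he]; nlinarith
  have hee : e ^ 2 = 40 * ν ^ 2 * e - 144 * ν ^ 4 + 576 * ν ^ 2 := by
    rw [he]; linear_combination 64 * ν ^ 2 * hq2
  have he0 : 20 * ν ^ 2 + 24 * ν ≤ e := by rw [he]; nlinarith
  rw [hQ] at ht
  obtain ⟨P, hP⟩ : ∃ P, P = (1 + x) * (9 + x) := ⟨_, rfl⟩
  have hPp : 0 < P := by rw [hP]; positivity
  obtain ⟨N, hN⟩ : ∃ N, N = (3 - 4 * ν ^ 2 + x) ^ 2 + 4 * x := ⟨_, rfl⟩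
  have hN0 : 0 ≤ N := by rw [hN]; positivity
  have hNP : N = P - 8 * ν ^ 2 * (3 + x) + 16 * ν ^ 4 := by rw [hN, hP]; ring
  rw [← hN] at ht
  rw [← hP]
  -- half of the trace, and the comparison value
  obtain ⟨T, hT⟩ : ∃ T, T = P + 4 * ν ^ 2 * (5 + x) := ⟨_, rfl⟩
  have hT0 : 0 < T := by rw [hT]; positivity
  have hdisc : N * P ≤ T ^ 2 := by
    have : T ^ 2 - N * P = 16 * ν ^ 2 * ((4 + x) * P + 16 * ν ^ 2) := by
      rw [hT, hNP, hP]; ring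
    have h2 : 0 ≤ 16 * ν ^ 2 * ((4 + x) * P + 16 * ν ^ 2) := by positivity
    linarith
  obtain ⟨m, hm⟩ : ∃ m, m = (9 + e) * (1 + x) := ⟨_, rfl⟩
  have hm0 : 0 < m := by
    rw [hm]; apply mul_pos _ (by linarith); nlinarith
  have hmT : T ≤ m := by
    rw [hT, hm, hP]
    have : x ≤ 16 * ν ^ 2 - 1 := by linarith
    have hν2 : ν ^ 2 ≤ ν := by nlinarith
    have h4 : 4 * ν ^ 2 * (5 + x) ≤ 20 * ν ^ 2 * (1 + x) := by nlinarith [mul_nonneg (sq_nonneg ν) hx]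
    have h5 : 9 + x + 20 * ν ^ 2 ≤ 9 + e := by nlinarith
    nlinarith [mul_le_mul_of_nonneg_left h5 (by linarith : (0 : ℝ) ≤ 1 + x)]
  -- value of the polynomial at the comparison point
  have hpm : 0 ≤ m ^ 2 - 2 * T * m + N * P := by
    have hred : m ^ 2 - 2 * T * m + N * P
      = (1 + x) * (x * (x ^ 2 + (1 - 2 * e - 8 * ν ^ 2) * x
        + (32 * ν ^ 2 * e - 2 * e - 128 * ν ^ 4 + 408 * ν ^ 2))) := by
      rw [hm, hT, hNP, hP]
      linear_combination (1 + x) ^ 2 * hee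
    rw [hred]
    apply mul_nonneg (by linarith)
    apply mul_nonneg hx
    have hy : 0 ≤ 16 * ν ^ 2 - 1 - x := by linarith
    have hfac : x ^ 2 + (1 - 2 * e - 8 * ν ^ 2) * x
        + (32 * ν ^ 2 * e - 2 * e - 128 * ν ^ 4 + 408 * ν ^ 2)
        = (16 * ν ^ 2 - 1 - x) ^ 2 + (16 * ν ^ 2 - 1 - x) * (2 * e + 1 - 24 * ν ^ 2)
          + 400 * ν ^ 2 := by ring
    rw [hfac]
    have h6 : 0 ≤ 2 * e + 1 - 24 * ν ^ 2 := by nlinarith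
    positivity
  have htm : t * m ≤ N := by rw [hm]; exact ht
  -- t ≤ N / m ≤ T / P
  have htT : t * P ≤ T := by
    have h7 : t * m * P ≤ T * m := by
      calc t * m * P ≤ N * P := mul_le_mul_of_nonneg_right htm hPp.le
        _ ≤ T ^ 2 := hdisc
        _ ≤ T * m := by rw [pow_two]; exact mul_le_mul_of_nonneg_left hmT hT0.le
    have h8 : (t * P) * m ≤ T * m := by linarith
    exact le_of_mul_le_mul_right h8 hm0
  constructor
  · have : 2 * P * (1 - t) + 8 * ν ^ 2 * (5 + x) = 2 * (T - t * P) := by rw [hT]; ring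
    rw [this]; linarith
  · have hG : P * (1 - t) ^ 2 + 16 * ν ^ 4 - 8 * ν ^ 2 * ((5 + x) * t + 3 + x)
        = P * t ^ 2 - 2 * T * t + N := by rw [hT, hNP]; ring
    rw [hG]
    obtain ⟨s, hs⟩ : ∃ s, s * m = N := ⟨N / m, div_mul_cancel₀ _ hm0.ne'⟩
    have hts : t ≤ s := by
      apply le_of_mul_le_mul_right _ hm0; rw [hs]; exact htm
    have hsT : s * P ≤ T := by
      have h8 : (s * P) * m ≤ T * m := by
        calc (s * P) * m = N * P := by rw [← hs]; ring
          _ ≤ T ^ 2 := hdisc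
          _ ≤ T * m := by rw [pow_two]; exact mul_le_mul_of_nonneg_left hmT hT0.le
      exact le_of_mul_le_mul_right h8 hm0
    have hps : 0 ≤ P * s ^ 2 - 2 * T * s + N := by
      have h9 : (P * s ^ 2 - 2 * T * s + N) * m ^ 2 = N * (m ^ 2 - 2 * T * m + N * P) := by
        rw [← hs]; ring
      have h10 : 0 ≤ (P * s ^ 2 - 2 * T * s + N) * m ^ 2 := by rw [h9]; positivity
      exact nonneg_of_mul_nonneg_left h10 (by positivity)
    have : P * t ^ 2 - 2 * T * t - (P * s ^ 2 - 2 * T * s)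
      = (s - t) * ((T - t * P) + (T - s * P)) := by ring
    have h11 : 0 ≤ (s - t) * ((T - t * P) + (T - s * P)) :=
      mul_nonneg (by linarith) (by linarith)
    linarith

theorem quad_small {ν a x : ℝ} (h0 : 0 ≤ ν) (h3 : ν ≤ 3 / 10) (hx : 0 ≤ x)
    (ha : ν * (8 / 3 - 20 / 9 * ν) ≤ a) :
    0 ≤ (159 / 100 * ν) ^ 2 * x ^ 2 + (9 * (159 / 100 * ν) ^ 2 + 2 * a * (159 / 100 * ν)
      - 8 * ν ^ 2 * (1 + (1 - 159 / 100 * ν))) * x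
      + (18 * a * (159 / 100 * ν) + a ^ 2 + 16 * ν ^ 4
        - 8 * ν ^ 2 * (1 - a + 5 * (1 - 159 / 100 * ν) + 4)) := by
  obtain ⟨k, hk⟩ : ∃ k, k = 8 / 3 - 20 / 9 * ν := ⟨_, rfl⟩
  rw [← hk] at ha
  have hk2 : 2 ≤ k := by rw [hk]; linarith
  have hak : 0 ≤ ν * k := by positivity
  have ha0 : 0 ≤ a := hak.trans ha
  have hB : 0 ≤ 9 * (159 / 100 * ν) ^ 2 + 2 * a * (159 / 100 * ν)
      - 8 * ν ^ 2 * (1 + (1 - 159 / 100 * ν)) := by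
    have : 0 ≤ a * ν := by positivity
    have h4 : 0 ≤ ν ^ 3 := by positivity
    nlinarith [sq_nonneg ν]
  have hC : 0 ≤ 18 * a * (159 / 100 * ν) + a ^ 2 + 16 * ν ^ 4
        - 8 * ν ^ 2 * (1 - a + 5 * (1 - 159 / 100 * ν) + 4) := by
    have h5 : 18 * (ν * k) * (159 / 100 * ν) + (ν * k) ^ 2 + 16 * ν ^ 4
        - 8 * ν ^ 2 * (1 - ν * k + 5 * (1 - 159 / 100 * ν) + 4)
        ≤ 18 * a * (159 / 100 * ν) + a ^ 2 + 16 * ν ^ 4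
        - 8 * ν ^ 2 * (1 - a + 5 * (1 - 159 / 100 * ν) + 4) := by
      have h6 : 0 ≤ (a - ν * k) * (18 * (159 / 100 * ν) + (a + ν * k) + 8 * ν ^ 2) :=
        mul_nonneg (by linarith) (by positivity)
      nlinarith
    refine le_trans ?_ h5
    have h7 : 18 * (ν * k) * (159 / 100 * ν) + (ν * k) ^ 2 + 16 * ν ^ 4
        - 8 * ν ^ 2 * (1 - ν * k + 5 * (1 - 159 / 100 * ν) + 4)
        = ν ^ 2 * (18 * k * (159 / 100) + k ^ 2 + 16 * ν ^ 2
          - 8 * (1 - ν * k + 5 * (1 - 159 / 100 * ν) + 4)) := by ring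
    rw [h7]
    apply mul_nonneg (sq_nonneg ν)
    rw [hk]
    nlinarith
  have := mul_nonneg hB hx
  positivity

theorem quad_large {ν a x : ℝ} (h3 : 3 / 10 ≤ ν) (h1 : ν ≤ 1) (hx : 16 * ν ^ 2 - 1 ≤ x)
    (ha : (24 * ν - 20 * ν ^ 2 + 24 / 5 * ν ^ 3) / 9 ≤ a) :
    0 ≤ (355 / 1000 + 39 / 100 * ν) ^ 2 * x ^ 2 + (9 * (355 / 1000 + 39 / 100 * ν) ^ 2
      + 2 * a * (355 / 1000 + 39 / 100 * ν)
      - 8 * ν ^ 2 * (1 + (645 / 1000 - 39 / 100 * ν))) * x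
      + (18 * a * (355 / 1000 + 39 / 100 * ν) + a ^ 2 + 16 * ν ^ 4
        - 8 * ν ^ 2 * (1 - a + 5 * (645 / 1000 - 39 / 100 * ν) + 4)) := by
  obtain ⟨k, hk⟩ : ∃ k, k = (24 * ν - 20 * ν ^ 2 + 24 / 5 * ν ^ 3) / 9 := ⟨_, rfl⟩
  rw [← hk] at ha
  have h0 : 0 ≤ ν := by linarith
  have hk0 : 0 ≤ k := by
    rw [hk]
    have : 0 ≤ ν * (1 - ν) := mul_nonneg h0 (by linarith)
    have : 0 ≤ ν ^ 3 := by positivity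
    nlinarith
  have ha0 : 0 ≤ a := hk0.trans ha
  have hx0 : 0 ≤ x := by nlinarith
  obtain ⟨b, hb⟩ : ∃ b, b = 355 / 1000 + 39 / 100 * ν := ⟨_, rfl⟩
  have hb0 : 0 ≤ b := by rw [hb]; linarith
  obtain ⟨H, hH⟩ : ∃ H, H = 645 / 1000 - 39 / 100 * ν := ⟨_, rfl⟩
  rw [← hb, ← hH]
  have h5 : b ^ 2 * x ^ 2 + (9 * b ^ 2 + 2 * k * b - 8 * ν ^ 2 * (1 + H)) * x
      + (18 * k * b + k ^ 2 + 16 * ν ^ 4 - 8 * ν ^ 2 * (1 - k + 5 * H + 4))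
      ≤ b ^ 2 * x ^ 2 + (9 * b ^ 2 + 2 * a * b - 8 * ν ^ 2 * (1 + H)) * x
      + (18 * a * b + a ^ 2 + 16 * ν ^ 4 - 8 * ν ^ 2 * (1 - a + 5 * H + 4)) := by
    have h6 : 0 ≤ (a - k) * (2 * b * x + 18 * b + (a + k) + 8 * ν ^ 2) :=
      mul_nonneg (by linarith) (by positivity)
    nlinarith
  refine le_trans ?_ h5
  have a1 : 0 ≤ ν - 3 / 10 := by linarith
  have a2 : 0 ≤ 1 - ν := by linarith
  have hd : 0 ≤ 2 * b ^ 2 * (16 * ν ^ 2 - 1)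
      + (9 * b ^ 2 + 2 * k * b - 8 * ν ^ 2 * (1 + H)) := by
    have e : 2 * b ^ 2 * (16 * ν ^ 2 - 1)
      + (9 * b ^ 2 + 2 * k * b - 8 * ν ^ 2 * (1 + H)) = (10505872 / 1500625) * (ν - 3 / 10) ^ 0 * (1 - ν) ^ 4
        + (32393752 / 900375) * (ν - 3 / 10) ^ 1 * (1 - ν) ^ 3
        + (163879991 / 2160900) * (ν - 3 / 10) ^ 2 * (1 - ν) ^ 2
        + (4148255 / 43218) * (ν - 3 / 10) ^ 3 * (1 - ν) ^ 1
        + (4702631 / 86436) * (ν - 3 / 10) ^ 4 * (1 - ν) ^ 0 := by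
      rw [hb, hH, hk]; ring
    rw [e]; positivity
  have hq : 0 ≤ b ^ 2 * (16 * ν ^ 2 - 1) ^ 2
      + (9 * b ^ 2 + 2 * k * b - 8 * ν ^ 2 * (1 + H)) * (16 * ν ^ 2 - 1)
      + (18 * k * b + k ^ 2 + 16 * ν ^ 4 - 8 * ν ^ 2 * (1 - k + 5 * H + 4)) := by
    have e : b ^ 2 * (16 * ν ^ 2 - 1) ^ 2
      + (9 * b ^ 2 + 2 * k * b - 8 * ν ^ 2 * (1 + H)) * (16 * ν ^ 2 - 1)
      + (18 * k * b + k ^ 2 + 16 * ν ^ 4 - 8 * ν ^ 2 * (1 - k + 5 * H + 4)) = (853175104 / 73530625) * (ν - 3 / 10) ^ 0 * (1 - ν) ^ 6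
        + (852624064 / 8823675) * (ν - 3 / 10) ^ 1 * (1 - ν) ^ 5
        + (7269696356 / 26471025) * (ν - 3 / 10) ^ 2 * (1 - ν) ^ 4
        + (6501489304 / 15882615) * (ν - 3 / 10) ^ 3 * (1 - ν) ^ 3
        + (4903170940 / 9529569) * (ν - 3 / 10) ^ 4 * (1 - ν) ^ 2
        + (7130868560 / 9529569) * (ν - 3 / 10) ^ 5 * (1 - ν) ^ 1
        + (4758961000 / 9529569) * (ν - 3 / 10) ^ 6 * (1 - ν) ^ 0 := by
      rw [hb, hH, hk]; ring
    rw [e]; positivity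
  have h8 : 0 ≤ x - (16 * ν ^ 2 - 1) := by linarith
  have h9 := mul_nonneg hd h8
  have h10 : 0 ≤ b ^ 2 * (x - (16 * ν ^ 2 - 1)) ^ 2 := by positivity
  linarith

/-! ### Positivity of the matrix as polynomial inequalities -/

theorem Mmat_psd_iff (ν s τ t x : ℝ) (hx : x = 4 * τ ^ 2) :
    ((Mmat ν s τ)ᴴ * Mmat ν s τ - (t : ℂ) • (1 : Matrix (Fin 2) (Fin 2) ℂ)).PosSemidef ↔
    0 ≤ 2 * ((1 + x) * (9 + x)) * (1 - t) + 8 * ν ^ 2 * (5 + x) ∧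
    0 ≤ (1 + x) * (9 + x) * (1 - t) ^ 2 + 16 * ν ^ 4
      - 8 * ν ^ 2 * ((5 + x) * t + 3 + x) := by
  obtain ⟨h0, h1, h01⟩ := V_facts τ
  have hx0 : 0 ≤ x := by rw [hx]; positivity
  rw [← hx] at h0 h1 h01
  have key : ∀ U W : ℂ, Complex.normSq U + Complex.normSq W = 4 / (1 + x) + 4 / (9 + x) →
      Complex.normSq U * Complex.normSq W = (4 / (1 + x)) * (4 / (9 + x)) →
      (U * W).re = 4 * (3 + x) / ((1 + x) * (9 + x)) →
      (((!![-(ν : ℂ) * U, 1; 1, -(ν : ℂ) * W] : Matrix (Fin 2) (Fin 2) ℂ)ᴴ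
        * !![-(ν : ℂ) * U, 1; 1, -(ν : ℂ) * W]
        - (t : ℂ) • (1 : Matrix (Fin 2) (Fin 2) ℂ)).PosSemidef ↔
      0 ≤ 2 * ((1 + x) * (9 + x)) * (1 - t) + 8 * ν ^ 2 * (5 + x) ∧
      0 ≤ (1 + x) * (9 + x) * (1 - t) ^ 2 + 16 * ν ^ 4
        - 8 * ν ^ 2 * ((5 + x) * t + 3 + x)) := by
    intro U W hs hp hr
    rw [psd_iff]
    have e1 : Complex.normSq (-(ν : ℂ) * U) = ν ^ 2 * Complex.normSq U := by
      rw [Complex.normSq_mul, Complex.normSq_neg, Complex.normSq_ofReal]; ring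
    have e2 : Complex.normSq (-(ν : ℂ) * W) = ν ^ 2 * Complex.normSq W := by
      rw [Complex.normSq_mul, Complex.normSq_neg, Complex.normSq_ofReal]; ring
    have e3 : (-(ν : ℂ) * U * (-(ν : ℂ) * W)).re = ν ^ 2 * (U * W).re := by
      rw [← Complex.re_ofReal_mul]; push_cast; congr 1; ring
    rw [e1, e2, e3, hr]
    have hP : 0 < (1 + x) * (9 + x) := by positivity
    have hx1 : (1 + x) ≠ 0 := by positivity
    have hx9 : (9 + x) ≠ 0 := by positivity
    have f1 : 2 * ((1 + x) * (9 + x)) * (1 - t) + 8 * ν ^ 2 * (5 + x)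
        = ((1 + x) * (9 + x)) * (2 + ν ^ 2 * Complex.normSq U + ν ^ 2 * Complex.normSq W - 2 * t) := by
      rw [show 2 + ν ^ 2 * Complex.normSq U + ν ^ 2 * Complex.normSq W - 2 * t
        = 2 + ν ^ 2 * (Complex.normSq U + Complex.normSq W) - 2 * t by ring, hs]
      field_simp
      ring
    have f2 : (1 + x) * (9 + x) * (1 - t) ^ 2 + 16 * ν ^ 4 - 8 * ν ^ 2 * ((5 + x) * t + 3 + x)
        = ((1 + x) * (9 + x)) * (t ^ 2 - (2 + ν ^ 2 * Complex.normSq U + ν ^ 2 * Complex.normSq W) * t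
          + (1 + ν ^ 2 * Complex.normSq U * (ν ^ 2 * Complex.normSq W)
            - 2 * (ν ^ 2 * (4 * (3 + x) / ((1 + x) * (9 + x)))))) := by
      rw [show t ^ 2 - (2 + ν ^ 2 * Complex.normSq U + ν ^ 2 * Complex.normSq W) * t
          + (1 + ν ^ 2 * Complex.normSq U * (ν ^ 2 * Complex.normSq W)
            - 2 * (ν ^ 2 * (4 * (3 + x) / ((1 + x) * (9 + x)))))
        = t ^ 2 - (2 + ν ^ 2 * (Complex.normSq U + Complex.normSq W)) * t
          + (1 + ν ^ 4 * (Complex.normSq U * Complex.normSq W)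
            - 2 * (ν ^ 2 * (4 * (3 + x) / ((1 + x) * (9 + x))))) by ring, hs, hp]
      field_simp
      ring
    rw [f1, f2, mul_nonneg_iff_of_pos_left hP, mul_nonneg_iff_of_pos_left hP]
  unfold Mmat
  by_cases hs : s = 1 / 2
  · simp only [hs, if_true]
    exact key _ _ (by rw [h0, h1]) (by rw [h0, h1]) h01
  · simp only [hs, if_false]
    exact key _ _ (by rw [h0, h1]; ring) (by rw [h0, h1]; ring) (by rw [mul_comm]; exact h01)

theorem Kf_mul_le {ν : ℝ} (hν : ν ∈ Set.Icc (0 : ℝ) 1) (τ : ℝ) :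
    Kf ν τ * (1 + 4 * τ ^ 2) * 4
      ≤ cc (1 - ν ^ 2) ^ 2 * ((3 - 4 * ν ^ 2 + 4 * τ ^ 2) ^ 2 + 4 * (4 * τ ^ 2)) := by
  have hU := Ups_mem hν
  have h := Fc_diff_le τ hU.1 hU.2
  rw [Ups_sq hν] at h
  have hz : ‖(1 / 2 - Complex.I * τ) ^ 2 - (Ups ν : ℂ) ^ 2‖ ^ 2
      = ((3 - 4 * ν ^ 2 + 4 * τ ^ 2) ^ 2 + 4 * (4 * τ ^ 2)) / 16 := by
    have e : (1 / 2 - Complex.I * τ) ^ 2 - (Ups ν : ℂ) ^ 2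
        = ((1 / 4 - τ ^ 2 - (1 - ν ^ 2) : ℝ) : ℂ) + ((-τ : ℝ) : ℂ) * Complex.I := by
      rw [← Complex.ofReal_pow, Ups_sq hν]; push_cast
      ring_nf
      rw [Complex.I_sq]; ring
    rw [e, ← Complex.normSq_eq_norm_sq, Complex.normSq_add_mul_I]
    ring
  have h2 := pow_le_pow_left₀ (norm_nonneg _) h 2
  rw [mul_pow, hz] at h2
  rw [Kf_eq hν τ]
  linarith

theorem part_one {ν : ℝ} (hν : ν ∈ Set.Icc (0 : ℝ) 1) (τ x : ℝ) (hx : x = 4 * τ ^ 2) :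
    0 ≤ 2 * ((1 + x) * (9 + x)) * (1 - eta ν ^ 2 * Kf ν τ) + 8 * ν ^ 2 * (5 + x) ∧
    0 ≤ (1 + x) * (9 + x) * (1 - eta ν ^ 2 * Kf ν τ) ^ 2 + 16 * ν ^ 4
      - 8 * ν ^ 2 * ((5 + x) * (eta ν ^ 2 * Kf ν τ) + 3 + x) := by
  have hν0 := hν.1
  have hν1 := hν.2
  have hx0 : 0 ≤ x := by rw [hx]; positivity
  obtain ⟨hq2, hq3⟩ := sqrt_facts hν
  obtain ⟨he0, heQ, hel⟩ := eta_facts hν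
  have hK := Kf_le_one hν τ
  have hK2 := Kf_mul_le hν τ
  rw [← hx] at hK hK2
  obtain ⟨q, hq⟩ : ∃ q, q = Real.sqrt (9 + 4 * ν ^ 2) := ⟨_, rfl⟩
  rw [← hq] at hq2 hq3 heQ hel
  obtain ⟨lam, hlam⟩ : ∃ lam, lam = (q - 4 * ν) ^ 2 / 9 := ⟨_, rfl⟩
  obtain ⟨a, ha⟩ : ∃ a, a = 1 - lam := ⟨_, rfl⟩
  have haq : a = (8 * ν * q - 20 * ν ^ 2) / 9 := by
    rw [ha, hlam]; linear_combination (-1 / 9) * hq2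
  have ha3 : (24 * ν - 20 * ν ^ 2 + 24 / 5 * ν ^ 3) / 9 ≤ a := by
    rw [haq]
    have := mul_le_mul_of_nonneg_left hq3 hν0
    nlinarith
  have ha2 : ν * (8 / 3 - 20 / 9 * ν) ≤ a := by
    have : 0 ≤ ν ^ 3 := by positivity
    nlinarith
  have ha0 : 0 ≤ a := by
    have : 0 ≤ ν * (8 / 3 - 20 / 9 * ν) := mul_nonneg hν0 (by linarith)
    linarith
  have hrel : 9 * a ^ 2 + 16 * ν ^ 4 = 8 * ν ^ 2 * (8 - 5 * a) := by
    rw [haq]; linear_combination (64 * ν ^ 2 / 9) * hq2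
  have hle : ∀ H, eta ν ^ 2 ≤ H → eta ν ^ 2 * Kf ν τ * (1 + x) ≤ lam + H * x := by
    intro H hH
    have h1 := mul_le_mul_of_nonneg_left hK (sq_nonneg (eta ν))
    have h2 := mul_le_mul_of_nonneg_right hH hx0
    rw [hlam, ← hel]
    linarith
  have fin : ∀ t : ℝ, t ≤ 1 → 0 ≤ 2 * ((1 + x) * (9 + x)) * (1 - t) + 8 * ν ^ 2 * (5 + x) := by
    intro t ht
    have : 0 ≤ 1 - t := by linarith
    positivity
  by_cases hs : ν ≤ 3 / 10
  · have := regionII (ν := ν) (b := 159 / 100 * ν) (H := 1 - 159 / 100 * ν) hx0 ha (by ring) ha0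
      (by positivity) hrel (hle _ (eta_sq_small hν0 hs)) (quad_small hν0 hs hx0 ha2)
    exact ⟨fin _ this.1, this.2⟩
  · have hs' : 3 / 10 ≤ ν := by linarith
    by_cases hxν : 16 * ν ^ 2 - 1 ≤ x
    · have := regionII (ν := ν) (b := 355 / 1000 + 39 / 100 * ν) (H := 645 / 1000 - 39 / 100 * ν)
        hx0 ha (by ring) ha0
        (by positivity) hrel (hle _ (eta_sq_large hs' hν1)) (quad_large hs' hν1 hxν ha3)
      exact ⟨fin _ this.1, this.2⟩
    · apply regionI hν0 hν1 hx0 (by linarith) hq2 (by nlinarith)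
      have hc := cc_pos hν
      obtain ⟨c, hcc⟩ : ∃ c, c = cc (1 - ν ^ 2) := ⟨_, rfl⟩
      rw [← hcc] at hc heQ hK2
      have hQ0 : 0 ≤ q + 4 * ν := by nlinarith
      obtain ⟨N, hN⟩ : ∃ N, N = (3 - 4 * ν ^ 2 + x) ^ 2 + 4 * x := ⟨_, rfl⟩
      have hN0 : 0 ≤ N := by rw [hN]; positivity
      rw [← hN] at hK2 ⊢
      have h4 : (eta ν * (c * (q + 4 * ν))) ^ 2 ≤ 2 ^ 2 :=
        pow_le_pow_left₀ (by positivity) heQ 2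
      have h5 := mul_le_mul_of_nonneg_left hK2
        (by positivity : 0 ≤ eta ν ^ 2 * (q + 4 * ν) ^ 2)
      have h6 := mul_le_mul_of_nonneg_right h4 hN0
      have h7 : eta ν ^ 2 * (q + 4 * ν) ^ 2 * (c ^ 2 * N)
          = (eta ν * (c * (q + 4 * ν))) ^ 2 * N := by ring
      have h8 : eta ν ^ 2 * Kf ν τ * ((q + 4 * ν) ^ 2 * (1 + x)) * 4
          = eta ν ^ 2 * (q + 4 * ν) ^ 2 * (Kf ν τ * (1 + x) * 4) := by ring
      linarith

theorem part_two_ne {ν : ℝ} (hν : ν ∈ Set.Icc (0 : ℝ) 1) (hne : ν ≠ Real.sqrt 3 / 2)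
    {η : ℝ} (hη : eta ν < η) :
    ¬ (0 ≤ 2 * ((1 + 0) * (9 + 0)) * (1 - η ^ 2 * Kf ν 0) + 8 * ν ^ 2 * (5 + 0) ∧
    0 ≤ (1 + 0) * (9 + 0) * (1 - η ^ 2 * Kf ν 0) ^ 2 + 16 * ν ^ 4
      - 8 * ν ^ 2 * ((5 + 0) * (η ^ 2 * Kf ν 0) + 3 + 0)) := by
  obtain ⟨hq2, hq3⟩ := sqrt_facts hν
  obtain ⟨he0, heQ, hel⟩ := eta_facts hν
  have hν0 := hν.1
  have hK : Kf ν 0 = (1 - 2 * w ν) ^ 2 := by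
    unfold Kf; simp; ring
  have hw : (1 - 2 * w ν) ≠ 0 := by
    have h1 := half_sub_w hν
    have h2 : cc (1 - ν ^ 2) * (3 / 4 - ν ^ 2) ≠ 0 :=
      mul_ne_zero (cc_pos hν).ne' (nu_sq_of_ne hν hne)
    intro h3
    apply h2; rw [← h1]; linarith
  have hw2 : 0 < (1 - 2 * w ν) ^ 2 := by positivity
  rw [hK]
  obtain ⟨q, hq⟩ : ∃ q, q = Real.sqrt (9 + 4 * ν ^ 2) := ⟨_, rfl⟩
  rw [← hq] at hq2 hq3 heQ hel
  have ht : (q - 4 * ν) ^ 2 / 9 < η ^ 2 * (1 - 2 * w ν) ^ 2 := by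
    rw [← hel]
    exact mul_lt_mul_of_pos_right (pow_lt_pow_left₀ hη he0.le two_ne_zero) hw2
  obtain ⟨t, htt⟩ : ∃ t, t = η ^ 2 * (1 - 2 * w ν) ^ 2 := ⟨_, rfl⟩
  rw [← htt] at ht ⊢
  rintro ⟨h1, h2⟩
  have e1 : 2 * ((1 + 0) * (9 + 0)) * (1 - t) + 8 * ν ^ 2 * (5 + 0)
      = 9 * (((q - 4 * ν) ^ 2 / 9 - t) + ((q + 4 * ν) ^ 2 / 9 - t)) := by
    linear_combination (-2) * hq2
  have e2 : (1 + 0) * (9 + 0) * (1 - t) ^ 2 + 16 * ν ^ 4 - 8 * ν ^ 2 * ((5 + 0) * t + 3 + 0)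
      = 9 * (((q - 4 * ν) ^ 2 / 9 - t) * ((q + 4 * ν) ^ 2 / 9 - t)) := by
    linear_combination (2 * t - (q ^ 2 + 9 - 28 * ν ^ 2) / 9) * hq2
  rw [e1] at h1
  rw [e2] at h2
  have h3 : (q - 4 * ν) ^ 2 / 9 - t < 0 := by linarith
  have h4 : 0 < (q + 4 * ν) ^ 2 / 9 - t := by linarith
  have := mul_neg_of_neg_of_pos h3 h4
  linarith

open Filter Topology in
theorem part_two_eq {ν : ℝ} (hν : ν ∈ Set.Icc (0 : ℝ) 1) (heq : ν = Real.sqrt 3 / 2)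
    {η : ℝ} (hη : eta ν < η) :
    ∃ τ : ℝ, (1 + 4 * τ ^ 2) * (9 + 4 * τ ^ 2) * (1 - η ^ 2 * Kf ν τ) ^ 2 + 16 * ν ^ 4
      - 8 * ν ^ 2 * ((5 + 4 * τ ^ 2) * (η ^ 2 * Kf ν τ) + 3 + 4 * τ ^ 2) < 0 := by
  have hn := nu_sq_of_eq heq
  have hw : w ν = 1 / 2 := by
    have := half_sub_w hν
    rw [hn] at this; linarith
  have he0 := (eta_facts hν).1
  have hpi : 0 < Real.pi - 2 := by linarith [Real.pi_gt_three]
  have he2 : eta ν ^ 2 * (3 * (Real.pi - 2) ^ 2) = 1 := by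
    unfold eta
    rw [if_pos heq, div_pow, mul_pow, Real.sq_sqrt (by norm_num)]
    field_simp
  have hη2 : 1 < η ^ 2 * (3 * (Real.pi - 2) ^ 2) := by
    rw [← he2]
    exact mul_lt_mul_of_pos_right (pow_lt_pow_left₀ hη he0.le two_ne_zero) (by positivity)
  obtain ⟨sg, hsg⟩ : ∃ sg : ℝ → ℝ, sg = fun τ => Real.sinh (Real.pi * τ) / τ := ⟨_, rfl⟩
  obtain ⟨g, hg⟩ : ∃ g : ℝ → ℝ, g = fun τ => (4 + 2 * sg τ ^ 2 /
    (Real.cosh (Real.pi * τ) * (Real.cosh (Real.pi * τ) + 1)) - 4 * sg τ / Real.cosh (Real.pi * τ))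
      / (1 + 4 * τ ^ 2) := ⟨_, rfl⟩
  have hKg : ∀ τ : ℝ, τ ≠ 0 → Kf ν τ = τ ^ 2 * g τ := by
    intro τ hτ
    have hc : Real.cosh (Real.pi * τ) ≠ 0 := (Real.cosh_pos _).ne'
    have hc1 : Real.cosh (Real.pi * τ) + 1 ≠ 0 := by
      have := Real.cosh_pos (Real.pi * τ); positivity
    have hcs := Real.cosh_sq (Real.pi * τ)
    have hx1 : 1 + 4 * τ ^ 2 ≠ 0 := by positivity
    rw [hg]
    simp only [hsg]
    unfold Kf
    rw [hw, Real.tanh_eq_sinh_div_cosh]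
    generalize Real.cosh (Real.pi * τ) = ch at *
    generalize Real.sinh (Real.pi * τ) = sh at *
    field_simp
    linear_combination 8 * hcs
  have hsl : Tendsto sg (𝓝[≠] 0) (𝓝 Real.pi) := by
    have hd : HasDerivAt (fun τ : ℝ => Real.sinh (Real.pi * τ)) Real.pi 0 := by
      have h1 : HasDerivAt (fun τ : ℝ => Real.pi * τ) (Real.pi * 1) 0 :=
        (hasDerivAt_id (0 : ℝ)).const_mul Real.pi
      have h2 := h1.sinh
      simpa using h2
    have := hd.tendsto_slope_zero
    rw [hsg]
    refine this.congr ?_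
    intro τ
    simp [div_eq_inv_mul]
  have hid : Tendsto (fun τ : ℝ => τ) (𝓝[≠] 0) (𝓝 0) := tendsto_nhdsWithin_of_tendsto_nhds tendsto_id
  have hch : Tendsto (fun τ : ℝ => Real.cosh (Real.pi * τ)) (𝓝[≠] 0) (𝓝 1) := by
    have : Continuous (fun τ : ℝ => Real.cosh (Real.pi * τ)) := by fun_prop
    have h := this.tendsto 0
    simp only [mul_zero, Real.cosh_zero] at h
    exact tendsto_nhdsWithin_of_tendsto_nhds h
  have hx : Tendsto (fun τ : ℝ => 4 * τ ^ 2) (𝓝[≠] 0) (𝓝 0) := by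
    have := (hid.pow 2).const_mul 4
    simpa using this
  have hgl : Tendsto g (𝓝[≠] 0) (𝓝 ((Real.pi - 2) ^ 2)) := by
    have h := (((((hsl.pow 2).const_mul 2).div (hch.mul (hch.add_const 1)) (by norm_num)).const_add 4).sub
      ((hsl.const_mul 4).div hch (by norm_num))).div (hx.const_add 1) (by norm_num)
    rw [hg]
    refine h.congr' ?_ |>.trans ?_
    · exact Eventually.of_forall fun τ => rfl
    · apply le_of_eq; congr 1; ring
  obtain ⟨R, hR⟩ : ∃ R : ℝ → ℝ, R = fun τ => (1 + 4 * τ ^ 2) * (9 + 4 * τ ^ 2) * (η ^ 2) ^ 2 * (τ ^ 2 * g τ ^ 2)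
      - (2 * ((1 + 4 * τ ^ 2) * (9 + 4 * τ ^ 2)) + 6 * (5 + 4 * τ ^ 2)) * η ^ 2 * g τ
      + (4 * (4 * τ ^ 2) + 16) := ⟨_, rfl⟩
  have hRl : Tendsto R (𝓝[≠] 0) (𝓝 (16 * (1 - η ^ 2 * (3 * (Real.pi - 2) ^ 2)))) := by
    have hP := (hx.const_add 1).mul (hx.const_add 9)
    have h := (((hP.mul_const ((η ^ 2) ^ 2)).mul ((hid.pow 2).mul (hgl.pow 2))).sub
      ((((hP.const_mul 2).add ((hx.const_add 5).const_mul 6)).mul_const (η ^ 2)).mul hgl)).add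
      ((hx.const_mul 4).add_const 16)
    rw [hR]
    refine h.trans ?_
    apply le_of_eq; congr 1; ring
  have hneg : 16 * (1 - η ^ 2 * (3 * (Real.pi - 2) ^ 2)) < 0 := by linarith
  have hev := (hRl.eventually (gt_mem_nhds hneg)).and (self_mem_nhdsWithin)
  obtain ⟨τ, hτ, hτ0⟩ := hev.exists
  have hτ0 : τ ≠ 0 := hτ0
  refine ⟨τ, ?_⟩
  rw [hKg τ hτ0]
  have h4 : ν ^ 4 = 9 / 16 := by
    rw [show ν ^ 4 = (ν ^ 2) ^ 2 by ring, hn]; norm_num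
  rw [h4, hn]
  have e : (1 + 4 * τ ^ 2) * (9 + 4 * τ ^ 2) * (1 - η ^ 2 * (τ ^ 2 * g τ)) ^ 2 + 16 * (9 / 16)
      - 8 * (3 / 4) * ((5 + 4 * τ ^ 2) * (η ^ 2 * (τ ^ 2 * g τ)) + 3 + 4 * τ ^ 2)
      = τ ^ 2 * R τ := by
    rw [hR]; ring
  rw [e]
  exact mul_neg_of_pos_of_neg (by positivity) hτ

/-- For ν ∈ [0,1], s = ±1/2 and every τ ∈ ℝ the matrix
M_s^ν(τ)* M_s^ν(τ) − η_ν² K^ν(τ) 𝟙 is positive semidefinite, and η_ν is the maximal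
constant with this property. -/
theorem Mmat_posSemidef_max (ν : ℝ) (hν : ν ∈ Set.Icc (0 : ℝ) 1) (s : ℝ)
    (hs : s = -(1/2) ∨ s = 1/2) :
    (∀ τ : ℝ, ((Mmat ν s τ)ᴴ * Mmat ν s τ
        - ((eta ν ^ 2 * Kf ν τ : ℝ) : ℂ) • (1 : Matrix (Fin 2) (Fin 2) ℂ)).PosSemidef) ∧
    (∀ η : ℝ, eta ν < η → ∃ τ : ℝ, ¬ ((Mmat ν s τ)ᴴ * Mmat ν s τ
        - ((η ^ 2 * Kf ν τ : ℝ) : ℂ) • (1 : Matrix (Fin 2) (Fin 2) ℂ)).PosSemidef) := by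
  constructor
  · intro τ
    rw [Mmat_psd_iff ν s τ _ (4 * τ ^ 2) rfl]
    exact part_one hν τ _ rfl
  · intro η hη
    by_cases h : ν = Real.sqrt 3 / 2
    · obtain ⟨τ, hτ⟩ := part_two_eq hν h hη
      refine ⟨τ, ?_⟩
      rw [Mmat_psd_iff ν s τ _ (4 * τ ^ 2) rfl]
      rintro ⟨-, h2⟩
      exact absurd h2 (not_le.2 hτ)
    · refine ⟨0, ?_⟩
      rw [Mmat_psd_iff ν s 0 _ 0 (by norm_num)]
      exact part_two_ne hν h hη
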